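/- arXiv:0906.4305 — 11 statements merged into one kernel-verified Lean document; each statement's English description precedes it below -/
import Mathlib

section
/- Let U ⊆ ℝ² be open and let X, Y : U → ℝ be differentiable. Define φ : U → ℂ² by φ(x,y) = (x + i·y, X(x,y) − i·Y(x,y)). Then at every point of U, the symplectic form vanishes on the pair of partial derivatives, ω(∂ₓφ, ∂ᵧφ) = 0, if and only if the Jacobian determinant of (X,Y) equals 1 at that point, i.e. Xₓ·Y_y − X_y·Yₓ = 1. (In other words, the diffeomorphism (X,Y) is incompressible if and only if the graph {(x+iy, X(x,y) − iY(x,y))} is a Lagrangian surface in ℂ².) -/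
/-- The symplectic form of ℂ²: ω(z,w) = −Im(z₁·conj w₁ + z₂·conj w₂). -/
noncomputable def sympForm (z w : ℂ × ℂ) : ℝ :=
  -((z.1 * (starRingEnd ℂ) w.1 + z.2 * (starRingEnd ℂ) w.2).im)

/-!
The symplectic form is the sum of the area forms of the two factors `ℂ`, and conjugation reverses
area. Hence `(f, conj g)` pulls `ω` back to the difference of the area forms pulled back by `f`
and by `g`; for the graph map this is `φ*ω = dx ∧ dy − dX ∧ dY`.
-/

open Complex
open scoped ComplexConjugate

section AreaForm

attribute [local instance] finrank_real_complex_fact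

theorem sympForm_eq_areaForm_add_areaForm (z w : ℂ × ℂ) :
    sympForm z w = Complex.orientation.areaForm z.1 w.1 + Complex.orientation.areaForm z.2 w.2 := by
  simp only [sympForm, Complex.areaForm, add_im, mul_im, conj_re, conj_im]
  ring

theorem areaForm_conj_conj (z w : ℂ) :
    Complex.orientation.areaForm (conj z) (conj w) = -Complex.orientation.areaForm z w := by
  simp only [Complex.areaForm, mul_im, conj_re, conj_im]
  ring

theorem areaForm_ofReal_add_I_mul_ofReal (a b c d : ℝ) :
    Complex.orientation.areaForm (a + I * b : ℂ) (c + I * d : ℂ) = a * d - c * b := by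
  rw [Complex.areaForm]
  simp only [mul_re, mul_im, conj_re, conj_im, add_re, add_im, ofReal_re, ofReal_im, I_re, I_im]
  ring

variable {E : Type*} [NormedAddCommGroup E] [NormedSpace ℝ E] {p : E}

theorem hasFDerivAt_ofReal_add_I_mul_ofReal {X Y : E → ℝ} {X' Y' : E →L[ℝ] ℝ}
    (hX : HasFDerivAt X X' p) (hY : HasFDerivAt Y Y' p) :
    HasFDerivAt (fun q => (X q + I * Y q : ℂ)) (ofRealCLM ∘L X' + I • ofRealCLM ∘L Y') p :=
  (ofRealCLM.hasFDerivAt.comp p hX).add ((ofRealCLM.hasFDerivAt.comp p hY).const_mul I)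

theorem areaForm_fderiv_ofReal_add_I_mul_ofReal {X Y : E → ℝ}
    (hX : DifferentiableAt ℝ X p) (hY : DifferentiableAt ℝ Y p) (u v : E) :
    Complex.orientation.areaForm (fderiv ℝ (fun q => (X q + I * Y q : ℂ)) p u)
        (fderiv ℝ (fun q => (X q + I * Y q : ℂ)) p v) =
      fderiv ℝ X p u * fderiv ℝ Y p v - fderiv ℝ X p v * fderiv ℝ Y p u := by
  rw [(hasFDerivAt_ofReal_add_I_mul_ofReal hX.hasFDerivAt hY.hasFDerivAt).fderiv]
  exact areaForm_ofReal_add_I_mul_ofReal ..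

theorem sympForm_fderiv_prodMk_conj {f g : E → ℂ}
    (hf : DifferentiableAt ℝ f p) (hg : DifferentiableAt ℝ g p) (u v : E) :
    sympForm (fderiv ℝ (fun q => (f q, conj (g q))) p u)
        (fderiv ℝ (fun q => (f q, conj (g q))) p v) =
      Complex.orientation.areaForm (fderiv ℝ f p u) (fderiv ℝ f p v) -
        Complex.orientation.areaForm (fderiv ℝ g p u) (fderiv ℝ g p v) := by
  have hg_conj :
      HasFDerivAt (fun q => conj (g q)) (conjCLE.toContinuousLinearMap ∘L fderiv ℝ g p) p :=
    conjCLE.hasFDerivAt.comp p hg.hasFDerivAt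
  rw [(hf.hasFDerivAt.prodMk hg_conj).fderiv, sympForm_eq_areaForm_add_areaForm, sub_eq_add_neg,
    ← areaForm_conj_conj]
  rfl

end AreaForm

theorem stmt_0_general {X Y : ℝ × ℝ → ℝ} {p : ℝ × ℝ}
    (hX : DifferentiableAt ℝ X p) (hY : DifferentiableAt ℝ Y p) {φ : ℝ × ℝ → ℂ × ℂ}
    (hφ : ∀ q, φ q = ((q.1 : ℂ) + I * (q.2 : ℂ), (X q : ℂ) - I * (Y q : ℂ))) (u v : ℝ × ℝ) :
    sympForm (fderiv ℝ φ p u) (fderiv ℝ φ p v) =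
      (u.1 * v.2 - v.1 * u.2) -
        (fderiv ℝ X p u * fderiv ℝ Y p v - fderiv ℝ X p v * fderiv ℝ Y p u) := by
  have hφ_conj : φ = fun q => ((q.1 : ℂ) + I * (q.2 : ℂ), conj ((X q : ℂ) + I * (Y q : ℂ))) := by
    funext q
    simp [hφ, sub_eq_add_neg]
  rw [hφ_conj, sympForm_fderiv_prodMk_conj
      (hasFDerivAt_ofReal_add_I_mul_ofReal hasFDerivAt_fst hasFDerivAt_snd).differentiableAt
      (hasFDerivAt_ofReal_add_I_mul_ofReal hX.hasFDerivAt hY.hasFDerivAt).differentiableAt,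
    areaForm_fderiv_ofReal_add_I_mul_ofReal (p := p) differentiableAt_fst differentiableAt_snd,
    areaForm_fderiv_ofReal_add_I_mul_ofReal hX hY, fderiv_fst, fderiv_snd]
  rfl

/-- An incompressibility criterion: for differentiable `X Y : U → ℝ` on an open `U ⊆ ℝ²`,
the graph map `φ(x,y) = (x + iy, X − iY)` has ω(∂ₓφ, ∂ᵧφ) = 0 at a point of `U` iff the
Jacobian determinant `Xₓ·Y_y − X_y·Yₓ` equals 1 there. -/
theorem stmt_0 (U : Set (ℝ × ℝ)) (hU : IsOpen U) (X Y : ℝ × ℝ → ℝ)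
    (hX : ∀ p ∈ U, DifferentiableAt ℝ X p) (hY : ∀ p ∈ U, DifferentiableAt ℝ Y p)
    (φ : ℝ × ℝ → ℂ × ℂ)
    (hφ : ∀ p : ℝ × ℝ,
      φ p = ((p.1 : ℂ) + Complex.I * (p.2 : ℂ), (X p : ℂ) - Complex.I * (Y p : ℂ))) :
    ∀ p ∈ U,
      (sympForm (fderiv ℝ φ p (1, 0)) (fderiv ℝ φ p (0, 1)) = 0 ↔
        fderiv ℝ X p (1, 0) * fderiv ℝ Y p (0, 1)
          - fderiv ℝ X p (0, 1) * fderiv ℝ Y p (1, 0) = 1) := by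
  intro p hp
  rw [stmt_0_general (hX p hp) (hY p hp) hφ, mul_one, mul_zero, sub_zero, sub_eq_zero, eq_comm]
end

section
/- Let κ₁, …, κₙ : ℝ → ℝ be differentiable functions. Then the identity Σⱼ κⱼ'(sⱼ) = 0 holds for all (s₁,…,sₙ) ∈ ℝⁿ if and only if there exist real numbers λ₁,…,λₙ and μ₁,…,μₙ with Σⱼ λⱼ = 0 such that κⱼ(s) = λⱼ·s + μⱼ for all s ∈ ℝ and every j. (This is the analytic content of the statement that a product of n unit-speed planar curves is Hamiltonian-minimal if and only if each curve has curvature an affine function of arclength, κⱼ(sⱼ) = λⱼsⱼ + μⱼ, i.e. each curve is a circle, a line, or a Cornu spiral of parameter λⱼ, with Σⱼ λⱼ = 0.) -/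
open scoped BigOperators

section SeparationOfVariables

variable {ι M : Type*} [Fintype ι] [AddCancelCommMonoid M] {α : ι → Type*}

theorem apply_eq_of_forall_sum_apply_eq {f : ∀ i, α i → M} {c : M}
    (h : ∀ s : ∀ i, α i, ∑ i, f i (s i) = c) (s : ∀ i, α i) (j : ι) (x : α j) :
    f j x = f j (s j) := by
  classical
  have sum_update (y : α j) : f j y + ∑ i ∈ Finset.univ \ {j}, f i (s i) = c := by
    rw [← h (Function.update s j y)]
    simp only [Function.apply_update f, Finset.sum_update_of_mem (Finset.mem_univ j)]
  exact add_right_cancel ((sum_update x).trans (sum_update (s j)).symm)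

theorem forall_sum_apply_eq_iff_exists_const [∀ i, Nonempty (α i)] {f : ∀ i, α i → M}
    {c : M} :
    (∀ s : ∀ i, α i, ∑ i, f i (s i) = c) ↔
      ∃ a : ι → M, ∑ i, a i = c ∧ ∀ i x, f i x = a i := by
  constructor
  · intro h
    let s : ∀ i, α i := fun _ ↦ Classical.arbitrary _
    exact ⟨fun i ↦ f i (s i), h s, apply_eq_of_forall_sum_apply_eq h s⟩
  · rintro ⟨a, ha, hf⟩ s
    simpa only [hf] using ha

end SeparationOfVariables

section Calculus

variable {𝕜 E : Type*} [RCLike 𝕜] [NormedAddCommGroup E] [NormedSpace 𝕜 E]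

theorem forall_deriv_eq_iff_exists_eq_smul_add {f : 𝕜 → E} (hf : Differentiable 𝕜 f) {a : E} :
    (∀ x, deriv f x = a) ↔ ∃ b, ∀ x, f x = x • a + b := by
  have hasDerivAt_smul (x : 𝕜) : HasDerivAt (fun t : 𝕜 ↦ t • a) a x := by
    simpa only [one_smul] using (hasDerivAt_id' x).smul_const a
  constructor
  · intro h
    have differentiable_smul : Differentiable 𝕜 fun t : 𝕜 ↦ t • a :=
      fun x ↦ (hasDerivAt_smul x).differentiableAt
    have deriv_eq (x : 𝕜) : deriv f x = deriv (fun t : 𝕜 ↦ t • a) x :=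
      (h x).trans (hasDerivAt_smul x).deriv.symm
    obtain ⟨b, hb⟩ := isOpen_univ.exists_eq_add_of_deriv_eq isPreconnected_univ
      hf.differentiableOn differentiable_smul.differentiableOn fun x _ ↦ deriv_eq x
    exact ⟨b, fun x ↦ hb (Set.mem_univ x)⟩
  · rintro ⟨b, hb⟩ x
    rw [funext hb]
    exact ((hasDerivAt_smul x).add_const b).deriv

theorem stmt_4_general {ι : Type*} [Fintype ι] {κ : ι → 𝕜 → E}
    (hκ : ∀ j, Differentiable 𝕜 (κ j)) :
    (∀ s : ι → 𝕜, ∑ j, deriv (κ j) (s j) = 0) ↔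
      ∃ lam mu : ι → E, ∑ j, lam j = 0 ∧ ∀ j s, κ j s = s • lam j + mu j := by
  simp only [forall_sum_apply_eq_iff_exists_const (f := fun j ↦ deriv (κ j)),
    fun j ↦ forall_deriv_eq_iff_exists_eq_smul_add (hκ j), Classical.skolem, exists_and_left]

end Calculus

/-- Differentiable functions `κ₁,…,κₙ : ℝ → ℝ` satisfy `Σⱼ κⱼ'(sⱼ) = 0` for all
`(s₁,…,sₙ)` iff each `κⱼ` is affine, `κⱼ(s) = λⱼ·s + μⱼ`, with `Σⱼ λⱼ = 0`.
(Hamiltonian minimality of a product of unit-speed planar curves: each curve is a circle,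
a line, or a Cornu spiral of parameter `λⱼ`, with `Σⱼ λⱼ = 0`.) -/
theorem stmt_4 (n : ℕ) (κ : Fin n → ℝ → ℝ) (hκ : ∀ j, Differentiable ℝ (κ j)) :
    (∀ s : Fin n → ℝ, ∑ j, deriv (κ j) (s j) = 0) ↔
      ∃ lam mu : Fin n → ℝ, (∑ j, lam j = 0) ∧
        ∀ (j : Fin n) (s : ℝ), κ j s = lam j * s + mu j := by
  simpa only [smul_eq_mul, mul_comm] using stmt_4_general hκ
end

section
/- Let n ≥ 1 be an integer, I ⊆ ℝ open, and α : I → ℂ twice differentiable with |α'(s)| = 1 and α(s) ≠ 0 for all s ∈ I. Let θ, φ : I → ℝ be differentiable with α'(s) = e^{i·θ(s)} and α(s) = |α(s)|·e^{i·φ(s)} for all s. Set β(s) = α(s)ⁿ and let κ_{αⁿ}(s) = Im(conj(β'(s))·β''(s)) / |β'(s)|³ be the curvature of the planar curve αⁿ. Then for all s ∈ I, |α(s)|^{n−1}·(θ'(s) + (n−1)·φ'(s)) = n·|α(s)|^{2n−2}·κ_{αⁿ}(s). (This gives the geometric interpretation of the quantity A_α = |α|^{n−1}·G'_α, with G_α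 = arg α' + (n−1)·arg α, as a multiple of |α|^{2n−2} times the curvature of αⁿ.) -/
/-!
A curve `β` whose velocity has argument lift `ψ` satisfies `|β'| κ_β = ψ'`, because `β' e^{-iψ}` is
real-valued and so its derivative is real. For `β = αⁿ` the velocity is `n αⁿ⁻¹ α'`; arguments of
products add, so `ψ = θ + (n - 1) φ` is a lift of it, and its modulus is `n |α|ⁿ⁻¹ |α'|`.
-/

open Complex Filter Topology
open scoped ComplexConjugate

/-- The signed curvature of a planar curve `β` at parameter `s`. It takes the junk value `0` where
`β'` vanishes. -/
noncomputable def planarCurvature (β : ℝ → ℂ) (s : ℝ) : ℝ :=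
  (conj (deriv β s) * deriv (deriv β) s).im / ‖deriv β s‖ ^ 3

/-- `φ` is an argument lift of `γ` near `s`: a choice of polar angle along `γ` which is
differentiable at `s`. The curve may pass through `0`, where the angle is unconstrained. -/
structure IsArgLiftAt (φ : ℝ → ℝ) (γ : ℝ → ℂ) (s : ℝ) : Prop where
  differentiableAt : DifferentiableAt ℝ φ s
  eventually_eq : ∀ᶠ t in 𝓝 s, γ t = ‖γ t‖ * exp (I * φ t)

namespace IsArgLiftAt

variable {φ ψ : ℝ → ℝ} {γ δ : ℝ → ℂ} {s : ℝ}

theorem congr (hγ : IsArgLiftAt φ γ s) (h : δ =ᶠ[𝓝 s] γ) : IsArgLiftAt φ δ s where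
  differentiableAt := hγ.differentiableAt
  eventually_eq := by
    filter_upwards [hγ.eventually_eq, h] with t hγt ht
    rwa [ht]

theorem mul (hγ : IsArgLiftAt φ γ s) (hδ : IsArgLiftAt ψ δ s) :
    IsArgLiftAt (fun t => φ t + ψ t) (fun t => γ t * δ t) s where
  differentiableAt := hγ.differentiableAt.add hδ.differentiableAt
  eventually_eq := by
    filter_upwards [hγ.eventually_eq, hδ.eventually_eq] with t hγt hδt
    calc γ t * δ t = (‖γ t‖ * exp (I * φ t)) * (‖δ t‖ * exp (I * ψ t)) := by rw [← hγt, ← hδt]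
      _ = ‖γ t * δ t‖ * exp (I * (φ t + ψ t : ℝ)) := by
        rw [norm_mul, ofReal_mul, ofReal_add, mul_add, Complex.exp_add]
        ring

theorem pow (hγ : IsArgLiftAt φ γ s) (m : ℕ) :
    IsArgLiftAt (fun t => m * φ t) (fun t => γ t ^ m) s where
  differentiableAt := hγ.differentiableAt.const_mul _
  eventually_eq := by
    filter_upwards [hγ.eventually_eq] with t hγt
    calc γ t ^ m = (‖γ t‖ * exp (I * φ t)) ^ m := by rw [← hγt]
      _ = ‖γ t ^ m‖ * exp (I * (m * φ t : ℝ)) := by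
        rw [mul_pow, ← Complex.exp_nat_mul, norm_pow]
        push_cast
        ring_nf

theorem const_mul (hγ : IsArgLiftAt φ γ s) {c : ℝ} (hc : 0 ≤ c) :
    IsArgLiftAt φ (fun t => c * γ t) s where
  differentiableAt := hγ.differentiableAt
  eventually_eq := by
    filter_upwards [hγ.eventually_eq] with t hγt
    rw [norm_mul, norm_real, Real.norm_of_nonneg hc, ofReal_mul, mul_assoc, ← hγt]

theorem eventually_mul_exp_neg_eq_norm (hφ : IsArgLiftAt φ γ s) :
    ∀ᶠ t in 𝓝 s, γ t * exp (-(I * φ t)) = ‖γ t‖ := by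
  filter_upwards [hφ.eventually_eq] with t ht
  calc γ t * exp (-(I * φ t)) = ‖γ t‖ * exp (I * φ t) * exp (-(I * φ t)) := by rw [← ht]
    _ = ‖γ t‖ := by
      rw [mul_assoc, ← Complex.exp_add, add_neg_cancel, Complex.exp_zero, mul_one]

theorem im_deriv_mul_exp_neg (hφ : IsArgLiftAt φ γ s) (hγ : DifferentiableAt ℝ γ s) :
    (deriv γ s * exp (-(I * φ s))).im = ‖γ s‖ * deriv φ s := by
  set u : ℂ := exp (-(I * φ s))
  have hasDerivAt_rotated : HasDerivAt (fun t => γ t * exp (-(I * φ t)))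
      (deriv γ s * u + γ s * (u * -(I * deriv φ s))) s :=
    hγ.hasDerivAt.mul (hφ.differentiableAt.hasDerivAt.ofReal_comp.const_mul I).neg.cexp
  have im_rotated : (fun t => (γ t * exp (-(I * φ t))).im) =ᶠ[𝓝 s] fun _ => 0 := by
    filter_upwards [hφ.eventually_mul_exp_neg_eq_norm] with t ht
    rw [ht, ofReal_im]
  have im_deriv_rotated : (deriv γ s * u + γ s * (u * -(I * deriv φ s))).im = 0 :=
    (imCLM.hasFDerivAt.comp_hasDerivAt s hasDerivAt_rotated).unique
      ((hasDerivAt_const s (0 : ℝ)).congr_of_eventuallyEq im_rotated)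
  have angular_term : γ s * (u * -(I * deriv φ s)) = -((‖γ s‖ * deriv φ s : ℝ) * I) := by
    rw [← mul_assoc, hφ.eventually_mul_exp_neg_eq_norm.self_of_nhds]
    push_cast
    ring
  rw [angular_term, add_im, neg_im, im_ofReal_mul, I_im] at im_deriv_rotated
  linarith

theorem im_conj_mul_deriv (hφ : IsArgLiftAt φ γ s) (hγ : DifferentiableAt ℝ γ s) :
    (conj (γ s) * deriv γ s).im = ‖γ s‖ ^ 2 * deriv φ s := by
  set u : ℂ := exp (-(I * φ s))
  have conj_u_mul_u : conj u * u = 1 := by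
    rw [← exp_conj, ← Complex.exp_add]
    simp
  calc (conj (γ s) * deriv γ s).im
      = (conj (γ s * u) * (deriv γ s * u)).im := by
        rw [map_mul]
        congr 1
        linear_combination -(conj (γ s) * deriv γ s) * conj_u_mul_u
    _ = ‖γ s‖ ^ 2 * deriv φ s := by
        rw [hφ.eventually_mul_exp_neg_eq_norm.self_of_nhds, conj_ofReal, im_ofReal_mul,
          hφ.im_deriv_mul_exp_neg hγ]
        ring

theorem speed_mul_planarCurvature {β : ℝ → ℂ} (hψ : IsArgLiftAt ψ (deriv β) s)
    (hβ : DifferentiableAt ℝ (deriv β) s) (hreg : deriv β s ≠ 0) :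
    ‖deriv β s‖ * planarCurvature β s = deriv ψ s := by
  rw [planarCurvature, hψ.im_conj_mul_deriv hβ]
  field_simp [norm_ne_zero_iff.mpr hreg]

end IsArgLiftAt

theorem stmt_7_general {n : ℕ} (hn : 1 ≤ n) {α : ℝ → ℂ} {θ φ : ℝ → ℝ} {s : ℝ}
    (hα' : DifferentiableAt ℝ (deriv α) s) (h0 : α s ≠ 0) (hreg : deriv α s ≠ 0)
    (hθ : IsArgLiftAt θ (deriv α) s) (hφ : IsArgLiftAt φ α s) :
    deriv θ s + ((n : ℝ) - 1) * deriv φ s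
      = n * ‖α s‖ ^ (n - 1) * ‖deriv α s‖ * planarCurvature (fun t => α t ^ n) s := by
  have hα : ∀ᶠ t in 𝓝 s, DifferentiableAt ℝ α t :=
    (hα'.continuousAt.eventually_ne hreg).mono fun _ => differentiableAt_of_deriv_ne_zero
  have deriv_pow_eq : deriv (fun t => α t ^ n)
      =ᶠ[𝓝 s] fun t => ((n : ℝ) : ℂ) * (α t ^ (n - 1) * deriv α t) := by
    filter_upwards [hα] with t ht
    rw [deriv_fun_pow ht, ofReal_natCast, mul_assoc]
  have lift_deriv_pow : IsArgLiftAt (fun t => ((n - 1 : ℕ) : ℝ) * φ t + θ t)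
      (deriv fun t => α t ^ n) s :=
    (((hφ.pow (n - 1)).mul hθ).const_mul n.cast_nonneg).congr deriv_pow_eq
  have differentiableAt_deriv_pow : DifferentiableAt ℝ (deriv fun t => α t ^ n) s :=
    (((hα.self_of_nhds.pow (n - 1)).mul hα').const_mul _).congr_of_eventuallyEq deriv_pow_eq
  have deriv_pow_ne_zero : deriv (fun t => α t ^ n) s ≠ 0 := by
    rw [deriv_pow_eq.self_of_nhds]
    exact mul_ne_zero (by exact_mod_cast (by lia : n ≠ 0)) (mul_ne_zero (pow_ne_zero _ h0) hreg)
  have speed_eq : ‖deriv (fun t => α t ^ n) s‖ = n * ‖α s‖ ^ (n - 1) * ‖deriv α s‖ := by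
    rw [deriv_pow_eq.self_of_nhds, norm_mul, norm_mul, norm_pow, norm_real,
      Real.norm_of_nonneg n.cast_nonneg, mul_assoc]
  rw [← speed_eq, lift_deriv_pow.speed_mul_planarCurvature differentiableAt_deriv_pow
    deriv_pow_ne_zero, deriv_fun_add (hφ.differentiableAt.const_mul _) hθ.differentiableAt,
    deriv_const_mul _ hφ.differentiableAt, Nat.cast_pred hn, add_comm]

/-- Geometric interpretation of `A_α = |α|^{n-1}·G'_α` with `G_α = arg α' + (n−1) arg α`:
for a twice differentiable, nonvanishing, unit-speed planar curve `α` with argument lifts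
`θ` of `α'` and `φ` of `α`, setting `β = αⁿ` and letting `κ_{αⁿ}` denote the curvature of
`β`, one has `|α|^{n−1}(θ' + (n−1)φ') = n·|α|^{2n−2}·κ_{αⁿ}`. -/
theorem stmt_7 (n : ℕ) (hn : 1 ≤ n) (I : Set ℝ) (hI : IsOpen I)
    (α : ℝ → ℂ) (θ φ : ℝ → ℝ)
    (hα : ∀ s ∈ I, DifferentiableAt ℝ α s ∧ DifferentiableAt ℝ (deriv α) s)
    (hunit : ∀ s ∈ I, ‖deriv α s‖ = 1)
    (h0 : ∀ s ∈ I, α s ≠ 0)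
    (hθ : ∀ s ∈ I, DifferentiableAt ℝ θ s)
    (hφ : ∀ s ∈ I, DifferentiableAt ℝ φ s)
    (hθlift : ∀ s ∈ I, deriv α s = Complex.exp (Complex.I * θ s))
    (hφlift : ∀ s ∈ I, α s = (‖α s‖ : ℂ) * Complex.exp (Complex.I * φ s))
    (β : ℝ → ℂ) (hβ : ∀ s, β s = α s ^ n)
    (κ : ℝ → ℝ)
    (hκ : ∀ s, κ s = ((starRingEnd ℂ) (deriv β s) * deriv (deriv β) s).im
        / ‖deriv β s‖ ^ 3) :
    ∀ s ∈ I,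
      ‖α s‖ ^ (n - 1) * (deriv θ s + ((n : ℝ) - 1) * deriv φ s)
        = (n : ℝ) * ‖α s‖ ^ (2 * n - 2) * κ s := by
  intro s hs
  obtain rfl : β = fun t => α t ^ n := funext hβ
  obtain rfl : κ = planarCurvature fun t => α t ^ n := funext hκ
  have hI_nhds : I ∈ 𝓝 s := hI.mem_nhds hs
  have lift_deriv : IsArgLiftAt θ (deriv α) s :=
    ⟨hθ s hs, eventually_of_mem hI_nhds fun t ht => by
      rw [hunit t ht, ofReal_one, one_mul, hθlift t ht]⟩
  have lift_curve : IsArgLiftAt φ α s := ⟨hφ s hs, eventually_of_mem hI_nhds hφlift⟩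
  have deriv_ne_zero : deriv α s ≠ 0 := norm_ne_zero_iff.mp (by rw [hunit s hs]; exact one_ne_zero)
  rw [stmt_7_general hn (hα s hs).2 (h0 s hs) deriv_ne_zero lift_deriv lift_curve, hunit s hs,
    show 2 * n - 2 = (n - 1) + (n - 1) by lia, pow_add]
  ring
end

section
/- For φ ∈ (0, π/2), let γ(s) = (cos φ · e^{i·tan φ·s}, sin φ · e^{−i·cot φ·s}). Then γ is a periodic map (there exists T > 0 with γ(s+T) = γ(s) for all s ∈ ℝ) if and only if (tan φ)² is a rational number. -/
/-!
A curve `(c₁ e^{iω₁s}, c₂ e^{iω₂s})` with `c₁, c₂ ≠ 0` has period `T` iff `ω₁T` and `ω₂T` are both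
integer multiples of `2π`, and a nonzero such `T` exists iff the frequency ratio `ω₁ / ω₂` is
rational. For the Legendrian curve this ratio is `tan φ / (-cot φ) = -tan² φ`.
-/

open scoped Real
open AddSubgroup (zmultiples mem_zmultiples_iff)

section Periodic

variable {α β γ : Type*}

theorem periodic_prodMk_iff [Add α] {f : α → β} {g : α → γ} {T : α} :
    Function.Periodic (fun x ↦ (f x, g x)) T ↔ Function.Periodic f T ∧ Function.Periodic g T := by
  simp only [Function.Periodic, Prod.mk.injEq, forall_and]

theorem exists_pos_periodic_iff_exists_ne_zero_periodic [AddCommGroup α] [LinearOrder α]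
    [IsOrderedAddMonoid α] {f : α → β} :
    (∃ T > 0, Function.Periodic f T) ↔ ∃ T ≠ 0, Function.Periodic f T := by
  refine ⟨fun ⟨T, hT, hf⟩ ↦ ⟨T, hT.ne', hf⟩, fun ⟨T, hT, hf⟩ ↦ ?_⟩
  rcases hT.lt_or_gt with hneg | hpos
  · exact ⟨-T, neg_pos.2 hneg, hf.neg⟩
  · exact ⟨T, hpos, hf⟩

end Periodic

theorem exists_ne_zero_mul_mem_zmultiples_iff {K : Type*} [Field K] [CharZero K] {a b p : K}
    (hb : b ≠ 0) (hp : p ≠ 0) :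
    (∃ T ≠ 0, a * T ∈ zmultiples p ∧ b * T ∈ zmultiples p) ↔ ∃ q : ℚ, a / b = q := by
  simp only [mem_zmultiples_iff, zsmul_eq_mul]
  constructor
  · rintro ⟨T, hT, ⟨m, hm⟩, ⟨n, hn⟩⟩
    refine ⟨m / n, ?_⟩
    calc a / b
      _ = a * T / (b * T) := (mul_div_mul_right a b hT).symm
      _ = m * p / (n * p) := by rw [hm, hn]
      _ = m / n := mul_div_mul_right _ _ hp
      _ = ((m / n : ℚ) : K) := by push_cast; rfl
  · rintro ⟨q, hq⟩
    have hden : (q.den : K) ≠ 0 := Nat.cast_ne_zero.2 q.den_ne_zero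
    refine ⟨q.den * p / b, by positivity, ⟨q.num, ?_⟩, ⟨q.den, ?_⟩⟩
    · have hnum : (q : K) * q.den = q.num := mod_cast q.mul_den_eq_num
      calc (q.num : K) * p
        _ = q * q.den * p := by rw [hnum]
        _ = a * (q.den * p / b) := by rw [← hq]; ring
    · rw [Int.cast_natCast, mul_div_cancel₀ _ hb]

theorem periodic_const_mul_circleExp_iff {c : ℂ} (hc : c ≠ 0) {ω T : ℝ} :
    Function.Periodic (fun s : ℝ ↦ c * Circle.exp (ω * s)) T ↔ ω * T ∈ zmultiples (2 * π) := by
  calc Function.Periodic (fun s : ℝ ↦ c * Circle.exp (ω * s)) T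
    _ ↔ Circle.exp (ω * T) = 1 := by
      simp only [Function.Periodic, mul_right_inj' hc, Circle.coe_inj, mul_add, Circle.exp_add,
        mul_eq_left, forall_const]
    _ ↔ ω * T ∈ zmultiples (2 * π) := by
      simp only [Circle.exp_eq_one, mem_zmultiples_iff, zsmul_eq_mul, eq_comm (a := ω * T)]

theorem exists_pos_periodic_const_mul_circleExp_prodMk_iff {c₁ c₂ : ℂ} (hc₁ : c₁ ≠ 0)
    (hc₂ : c₂ ≠ 0) {ω₁ ω₂ : ℝ} (hω₂ : ω₂ ≠ 0) :
    (∃ T > 0, Function.Periodic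
      (fun s : ℝ ↦ (c₁ * Circle.exp (ω₁ * s), c₂ * Circle.exp (ω₂ * s))) T) ↔
      ∃ q : ℚ, ω₁ / ω₂ = q := by
  rw [exists_pos_periodic_iff_exists_ne_zero_periodic]
  simp only [periodic_prodMk_iff, periodic_const_mul_circleExp_iff hc₁,
    periodic_const_mul_circleExp_iff hc₂]
  exact exists_ne_zero_mul_mem_zmultiples_iff hω₂ Real.two_pi_pos.ne'

theorem stmt_9_general (φ : ℝ) (hsin : Real.sin φ ≠ 0) (hcos : Real.cos φ ≠ 0)
    (γ : ℝ → ℂ × ℂ)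
    (hγ : ∀ s : ℝ, γ s =
      ((Real.cos φ : ℂ) * Complex.exp (Complex.I * (Real.tan φ * s)),
       (Real.sin φ : ℂ) * Complex.exp (-Complex.I * (Real.cot φ * s)))) :
    (∃ T > 0, ∀ s : ℝ, γ (s + T) = γ s) ↔ ∃ q : ℚ, Real.tan φ ^ 2 = (q : ℝ) := by
  have hγ_circle : γ = fun s : ℝ ↦ ((Real.cos φ : ℂ) * Circle.exp (Real.tan φ * s),
      (Real.sin φ : ℂ) * Circle.exp (-Real.cot φ * s)) := by
    funext s
    simp only [hγ, Circle.coe_exp]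
    push_cast
    ring_nf
  have hcot : -Real.cot φ ≠ 0 := by
    rw [Real.cot_eq_cos_div_sin]
    exact neg_ne_zero.2 (div_ne_zero hcos hsin)
  have hratio : Real.tan φ / -Real.cot φ = -Real.tan φ ^ 2 := by
    rw [Real.tan_eq_sin_div_cos, Real.cot_eq_cos_div_sin]
    field_simp
  calc (∃ T > 0, Function.Periodic γ T)
    _ ↔ ∃ q : ℚ, Real.tan φ / -Real.cot φ = q := by
      rw [hγ_circle]
      exact exists_pos_periodic_const_mul_circleExp_prodMk_iff (mod_cast hcos) (mod_cast hsin) hcot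
    _ ↔ ∃ q : ℚ, Real.tan φ ^ 2 = q := by
      rw [hratio, neg_surjective.exists]
      simp only [Rat.cast_neg, neg_inj]

/-- The constant-curvature Legendrian curve
`γ(s) = (cos φ·e^{i tan φ·s}, sin φ·e^{−i cot φ·s})`, `φ ∈ (0, π/2)`, is periodic
iff `tan²φ` is rational. -/
theorem stmt_9 (φ : ℝ) (hφ : φ ∈ Set.Ioo 0 (Real.pi / 2))
    (γ : ℝ → ℂ × ℂ)
    (hγ : ∀ s : ℝ, γ s =
      ((Real.cos φ : ℂ) * Complex.exp (Complex.I * (Real.tan φ * s)),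
       (Real.sin φ : ℂ) * Complex.exp (-Complex.I * (Real.cot φ * s)))) :
    (∃ T > 0, ∀ s : ℝ, γ (s + T) = γ s) ↔ ∃ q : ℚ, Real.tan φ ^ 2 = (q : ℝ) :=
  stmt_9_general φ (Real.sin_pos_of_pos_of_lt_pi hφ.1 (by linarith [hφ.2, Real.pi_pos])).ne'
    (Real.cos_pos_of_mem_Ioo ⟨by linarith [hφ.1, Real.pi_pos], hφ.2⟩).ne' γ hγ
end

section
/- Let n₁, n₂ be positive integers and define γ : ℝ → ℂ² by γ(s) = (1/√(n₁+n₂))·(√n₁·e^{i√(n₂/n₁)·s}, √n₂·e^{−i√(n₁/n₂)·s}). Then γ is a unit-speed Legendrian curve in S³: |γ₁|² + |γ₂|² = 1, |γ₁'|² + |γ₂'|² = 1 and γ₁'·conj(γ₁) + γ₂'·conj(γ₂) = 0; moreover γ₁(s)γ₂'(s) − γ₂(s)γ₁'(s) = −i·e^{i(√(n₂/n₁) − √(n₁/n₂))·s}, so γ has constant curvature c = √(n₂/n₁) − √(n₁/n₂); and γ is closed: γ(s + 2π√(n₁n₂)) = γ(s) for all s ∈ ℝ. -/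
/-!
Each coordinate of `γ` is a uniform circular motion `r e^{iωs}`, so being unit-speed Legendrian is
a condition on radii and frequencies: `r₁² + r₂² = 1`, `(r₁ω₁)² + (r₂ω₂)² = 1` and
`r₁²ω₁ + r₂²ω₂ = 0`. Here `r₁ω₁ = r₂` and `r₂ω₂ = -r₁`, so the last two follow from the first.
Likewise `γ₁γ₂' - γ₂γ₁' = i r₁r₂(ω₂ - ω₁) e^{i(ω₁ + ω₂)s}`, where
`r₁r₂(ω₂ - ω₁) = -(r₁² + r₂²) = -1`. Over the period `2π√(n₁n₂)` the coordinates wind `n₂` and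
`-n₁` times around the origin.
-/

section CircularMotion

open Complex ComplexConjugate

theorem circleMap_zero_mul_eq (r ω s : ℝ) :
    circleMap 0 r (ω * s) = r * exp (I * (ω * s)) := by
  rw [circleMap_zero, ofReal_mul, mul_comm I]

theorem deriv_circleMap_mul (c : ℂ) (r ω s : ℝ) :
    deriv (fun t ↦ circleMap c r (ω * t)) s = ω * I * circleMap 0 r (ω * s) := by
  rw [deriv_comp_mul_left ω (circleMap c r) s, deriv_circleMap, real_smul]
  ring

theorem norm_deriv_circleMap_mul (c : ℂ) (r ω s : ℝ) :
    ‖deriv (fun t ↦ circleMap c r (ω * t)) s‖ = |r * ω| := by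
  rw [deriv_circleMap_mul, norm_mul, norm_mul, norm_I, norm_circleMap_zero, norm_real,
    Real.norm_eq_abs, mul_one, ← abs_mul, mul_comm]

theorem deriv_circleMap_zero_mul_mul_conj (r ω s : ℝ) :
    deriv (fun t ↦ circleMap 0 r (ω * t)) s * conj (circleMap 0 r (ω * s)) =
      (r ^ 2 * ω : ℝ) * I := by
  rw [deriv_circleMap_mul, mul_assoc, mul_conj', norm_circleMap_zero, ← ofReal_pow, sq_abs]
  push_cast
  ring

theorem circleMap_zero_mul_wronskian (r₁ r₂ ω₁ ω₂ s : ℝ) :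
    circleMap 0 r₁ (ω₁ * s) * deriv (fun t ↦ circleMap 0 r₂ (ω₂ * t)) s -
        circleMap 0 r₂ (ω₂ * s) * deriv (fun t ↦ circleMap 0 r₁ (ω₁ * t)) s =
      I * circleMap 0 (r₁ * r₂ * (ω₂ - ω₁)) ((ω₁ + ω₂) * s) := by
  rw [deriv_circleMap_mul, deriv_circleMap_mul]
  simp only [circleMap_zero, add_mul, ofReal_add, ofReal_sub, ofReal_mul, exp_add]
  ring

theorem periodic_circleMap_mul (c : ℂ) (r : ℝ) {ω T : ℝ} {n : ℤ}
    (hT : ω * T = n * (2 * Real.pi)) :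
    Function.Periodic (fun s ↦ circleMap c r (ω * s)) T := fun s ↦ by
  simpa only [mul_add, hT] using (periodic_circleMap c r).int_mul n (ω * s)

end CircularMotion

section Legendrian

open Complex ComplexConjugate

/-- The curve `(γ₁, γ₂) : ℝ → ℂ²` is a unit-speed Legendrian curve in the unit sphere `S³`: it is
Hermitian-orthogonal to its velocity. The coordinates are kept separate because `ℂ × ℂ` carries the
sup norm. -/
structure IsUnitSpeedLegendrian (γ₁ γ₂ : ℝ → ℂ) : Prop where
  differentiable_fst : Differentiable ℝ γ₁
  differentiable_snd : Differentiable ℝ γ₂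
  norm_sq_add_norm_sq (s : ℝ) : ‖γ₁ s‖ ^ 2 + ‖γ₂ s‖ ^ 2 = 1
  norm_deriv_sq_add_norm_deriv_sq (s : ℝ) : ‖deriv γ₁ s‖ ^ 2 + ‖deriv γ₂ s‖ ^ 2 = 1
  deriv_mul_conj_add (s : ℝ) : deriv γ₁ s * conj (γ₁ s) + deriv γ₂ s * conj (γ₂ s) = 0

theorem isUnitSpeedLegendrian_circleMap {r₁ r₂ ω₁ ω₂ : ℝ} (radii : r₁ ^ 2 + r₂ ^ 2 = 1)
    (speed : (r₁ * ω₁) ^ 2 + (r₂ * ω₂) ^ 2 = 1) (contact : r₁ ^ 2 * ω₁ + r₂ ^ 2 * ω₂ = 0) :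
    IsUnitSpeedLegendrian (fun s ↦ circleMap 0 r₁ (ω₁ * s)) (fun s ↦ circleMap 0 r₂ (ω₂ * s)) where
  differentiable_fst := (differentiable_circleMap 0 r₁).comp (differentiable_id.const_mul ω₁)
  differentiable_snd := (differentiable_circleMap 0 r₂).comp (differentiable_id.const_mul ω₂)
  norm_sq_add_norm_sq _ := by
    rw [norm_circleMap_zero, norm_circleMap_zero, sq_abs, sq_abs, radii]
  norm_deriv_sq_add_norm_deriv_sq _ := by
    rw [norm_deriv_circleMap_mul, norm_deriv_circleMap_mul, sq_abs, sq_abs, speed]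
  deriv_mul_conj_add _ := by
    rw [deriv_circleMap_zero_mul_mul_conj, deriv_circleMap_zero_mul_mul_conj, ← add_mul,
      ← ofReal_add, contact, ofReal_zero, zero_mul]

end Legendrian

section RealParameters

open Complex

theorem sqrt_div_mul_sqrt_div {a : ℝ} (ha : 0 < a) (b c : ℝ) : √a / c * √(b / a) = √b / c := by
  rw [div_mul_eq_mul_div, ← Real.sqrt_mul ha.le, mul_div_cancel₀ b ha.ne']

variable {a b : ℝ}

theorem sqrt_div_mul_sqrt_mul (ha : 0 < a) (hb : 0 ≤ b) : √(b / a) * √(a * b) = b := by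
  rw [← Real.sqrt_mul (div_nonneg hb ha.le), ← mul_assoc, div_mul_cancel₀ b ha.ne',
    Real.sqrt_mul_self hb]

theorem sqrt_div_sqrt_add_sq_add_sq (ha : 0 ≤ a) (hb : 0 ≤ b) (hab : 0 < a + b) :
    (√a / √(a + b)) ^ 2 + (√b / √(a + b)) ^ 2 = 1 := by
  rw [div_pow, div_pow, Real.sq_sqrt ha, Real.sq_sqrt hb, Real.sq_sqrt hab.le, ← add_div,
    div_self hab.ne']

theorem isUnitSpeedLegendrian_circleMap_sqrt (ha : 0 < a) (hb : 0 < b) :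
    IsUnitSpeedLegendrian (fun s ↦ circleMap 0 (√a / √(a + b)) (√(b / a) * s))
      (fun s ↦ circleMap 0 (√b / √(a + b)) (-√(a / b) * s)) := by
  have radii := sqrt_div_sqrt_add_sq_add_sq ha.le hb.le (add_pos ha hb)
  have speed₁ := sqrt_div_mul_sqrt_div ha b √(a + b)
  have speed₂ := sqrt_div_mul_sqrt_div hb a √(a + b)
  refine isUnitSpeedLegendrian_circleMap radii ?_ ?_
  · rw [mul_neg, speed₁, speed₂, neg_sq, add_comm, radii]
  · linear_combination √a / √(a + b) * speed₁ - √b / √(a + b) * speed₂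

theorem circleMap_sqrt_wronskian (ha : 0 < a) (hb : 0 < b) (s : ℝ) :
    circleMap 0 (√a / √(a + b)) (√(b / a) * s) *
          deriv (fun t ↦ circleMap 0 (√b / √(a + b)) (-√(a / b) * t)) s -
        circleMap 0 (√b / √(a + b)) (-√(a / b) * s) *
          deriv (fun t ↦ circleMap 0 (√a / √(a + b)) (√(b / a) * t)) s =
      -I * exp (I * ((√(b / a) - √(a / b)) * s)) := by
  have radii := sqrt_div_sqrt_add_sq_add_sq ha.le hb.le (add_pos ha hb)
  have speed₁ := sqrt_div_mul_sqrt_div ha b √(a + b)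
  have speed₂ := sqrt_div_mul_sqrt_div hb a √(a + b)
  have amplitude : √a / √(a + b) * (√b / √(a + b)) * (-√(a / b) - √(b / a)) = -1 := by
    linear_combination -(√a / √(a + b)) * speed₂ - √b / √(a + b) * speed₁ - radii
  rw [circleMap_zero_mul_wronskian, amplitude, circleMap_zero_mul_eq]
  push_cast
  ring_nf

end RealParameters

/-- For positive integers `n₁, n₂`, the curve
`γ(s) = (1/√(n₁+n₂))(√n₁·e^{i√(n₂/n₁)s}, √n₂·e^{−i√(n₁/n₂)s})` is a closed unit-speed
Legendrian curve in S³ with `γ₁γ₂' − γ₂γ₁' = −i·e^{i(√(n₂/n₁)−√(n₁/n₂))s}`, hence of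
constant curvature `√(n₂/n₁) − √(n₁/n₂)`, and with period `2π√(n₁n₂)`. -/
theorem stmt_11 (n₁ n₂ : ℕ) (h₁ : 0 < n₁) (h₂ : 0 < n₂)
    (γ₁ γ₂ : ℝ → ℂ)
    (hγ₁ : ∀ s : ℝ, γ₁ s = ((Real.sqrt n₁ / Real.sqrt (n₁ + n₂) : ℝ) : ℂ) *
        Complex.exp (Complex.I * (Real.sqrt ((n₂ : ℝ) / n₁) * s)))
    (hγ₂ : ∀ s : ℝ, γ₂ s = ((Real.sqrt n₂ / Real.sqrt (n₁ + n₂) : ℝ) : ℂ) *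
        Complex.exp (-Complex.I * (Real.sqrt ((n₁ : ℝ) / n₂) * s))) :
    ∀ s : ℝ,
      ‖γ₁ s‖ ^ 2 + ‖γ₂ s‖ ^ 2 = 1 ∧
      ‖deriv γ₁ s‖ ^ 2 + ‖deriv γ₂ s‖ ^ 2 = 1 ∧
      deriv γ₁ s * (starRingEnd ℂ) (γ₁ s) + deriv γ₂ s * (starRingEnd ℂ) (γ₂ s) = 0 ∧
      γ₁ s * deriv γ₂ s - γ₂ s * deriv γ₁ s
        = -Complex.I * Complex.exp (Complex.I *
            ((Real.sqrt ((n₂ : ℝ) / n₁) - Real.sqrt ((n₁ : ℝ) / n₂)) * s)) ∧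
      γ₁ (s + 2 * Real.pi * Real.sqrt ((n₁ : ℝ) * n₂)) = γ₁ s ∧
      γ₂ (s + 2 * Real.pi * Real.sqrt ((n₁ : ℝ) * n₂)) = γ₂ s := by
  have ha : (0 : ℝ) < n₁ := mod_cast h₁
  have hb : (0 : ℝ) < n₂ := mod_cast h₂
  have winding₁ : √(n₂ / n₁ : ℝ) * √(n₁ * n₂ : ℝ) = n₂ := sqrt_div_mul_sqrt_mul ha hb.le
  have winding₂ : √(n₁ / n₂ : ℝ) * √(n₁ * n₂ : ℝ) = n₁ := by
    rw [mul_comm (n₁ : ℝ), sqrt_div_mul_sqrt_mul hb ha.le]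
  obtain rfl : γ₁ = fun s ↦ circleMap 0 (√n₁ / √(n₁ + n₂)) (√(n₂ / n₁) * s) :=
    funext fun s ↦ by rw [hγ₁, circleMap_zero_mul_eq]
  obtain rfl : γ₂ = fun s ↦ circleMap 0 (√n₂ / √(n₁ + n₂)) (-√(n₁ / n₂) * s) :=
    funext fun s ↦ by rw [hγ₂, circleMap_zero_mul_eq]; push_cast; ring_nf
  have legendrian := isUnitSpeedLegendrian_circleMap_sqrt ha hb
  refine fun s ↦ ⟨legendrian.norm_sq_add_norm_sq s, legendrian.norm_deriv_sq_add_norm_deriv_sq s,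
    legendrian.deriv_mul_conj_add s, circleMap_sqrt_wronskian ha hb s,
    periodic_circleMap_mul 0 _ (n := n₂) ?_ s, periodic_circleMap_mul 0 _ (n := -n₁) ?_ s⟩
  · push_cast
    linear_combination 2 * Real.pi * winding₁
  · push_cast
    linear_combination -2 * Real.pi * winding₂
end

section
/- Let α = (α₁, α₂) : I → ℂ² be a unit-speed Legendrian curve in the anti-de Sitter space H³₁ (|α₁|² − |α₂|² = −1, |α₁'|² − |α₂'|² = 1, α₁'·conj(α₁) − α₂'·conj(α₂) = 0) and let η = (y₁, y₂, y₃) : I → ℝ³ be its projection, defined by y₁ + i·y₂ = α₁·conj(α₂) and y₃ = (|α₁|² + |α₂|²)/2. Then for all t ∈ I: (i) y₁² + y₂² − y₃² = −1/4 and y₃ ≥ 1/2, i.e. η lies on the hyperbolic plane H²(−1/2); (ii) η is parametrized by arclength for the Lorentzian metric: y₁'² + y₂'² − y₃'² = 1; (iii) |α₁|² = −1/2 + y₃; and (iv) Im(α₁'·conj(α₁)) = y₁·y₂' − y₂·y₁'. -/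
/-!
The fibres of the Hopf projection `Π(z, w) = (z w̄, (|z|² + |w|²) / 2)` are the orbits of
`(z, w) ↦ (e^{iθ} z, e^{iθ} w)`, so `ip` is tangent to the fibre through `p`. For every vector `v`
at `p`, the Lorentzian square norm of `dΠ_p v` is `-⟨p, p⟩ ⟨v, v⟩ + (Re ⟨v, ip⟩)²`. The last term
vanishes for the velocity `v` of a Legendrian curve, and `⟨p, p⟩ = -1` on the anti-de Sitter space,
so `Π` preserves the speed of the curve.
-/

namespace AntiDeSitter

open scoped ComplexConjugate

/-- The indefinite quadratic form `⟨p, p⟩ = |z|² - |w|²` on `ℂ²`; the anti-de Sitter space is its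
level set `-1`. -/
noncomputable def quadForm (p : ℂ × ℂ) : ℝ := ‖p.1‖ ^ 2 - ‖p.2‖ ^ 2

/-- The contact form, evaluated at the vector `v` based at `p`: the imaginary part of the indefinite
Hermitian product of `v` and `p`. Its kernel contains the velocities of Legendrian curves. -/
def contactForm (p v : ℂ × ℂ) : ℝ := (v.1 * conj p.1).im - (v.2 * conj p.2).im

/-- The Lorentzian quadratic form `x₁² + x₂² - x₃²` on `ℝ³`, encoded as `ℂ × ℝ` through
`(x₁ + i x₂, x₃)`. -/
noncomputable def lorentzForm (x : ℂ × ℝ) : ℝ := ‖x.1‖ ^ 2 - x.2 ^ 2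

/-- The Hopf projection `Π`, defined on all of `ℂ²`. -/
noncomputable def hopf (p : ℂ × ℂ) : ℂ × ℝ :=
  (p.1 * conj p.2, (‖p.1‖ ^ 2 + ‖p.2‖ ^ 2) / 2)

/-- The differential of the Hopf projection at `p`, applied to the vector `v`; see
`hasDerivAt_hopf`. -/
def hopfDeriv (p v : ℂ × ℂ) : ℂ × ℝ :=
  (v.1 * conj p.2 + p.1 * conj v.2, (v.1 * conj p.1).re + (v.2 * conj p.2).re)

theorem lorentzForm_eq (x : ℂ × ℝ) : lorentzForm x = x.1.re ^ 2 + x.1.im ^ 2 - x.2 ^ 2 := by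
  rw [lorentzForm, Complex.sq_norm, Complex.normSq_apply]
  ring

theorem lorentzForm_hopf (p : ℂ × ℂ) : lorentzForm (hopf p) = -(quadForm p ^ 2 / 4) := by
  simp only [lorentzForm, hopf, quadForm, norm_mul, RCLike.norm_conj]
  ring

theorem norm_sq_fst_eq_hopf_snd (p : ℂ × ℂ) : ‖p.1‖ ^ 2 = quadForm p / 2 + (hopf p).2 := by
  simp only [hopf, quadForm]
  ring

theorem lorentzForm_hopfDeriv (p v : ℂ × ℂ) :
    lorentzForm (hopfDeriv p v) = -(quadForm p * quadForm v) + contactForm p v ^ 2 := by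
  obtain ⟨⟨z, w⟩, z', w'⟩ := p, v
  have norm_sq_mul_conj (a b : ℂ) :
      (a * conj b).re ^ 2 + (a * conj b).im ^ 2 = ‖a‖ ^ 2 * ‖b‖ ^ 2 := by
    rw [← mul_pow, ← RCLike.norm_conj b, ← norm_mul, Complex.sq_norm, Complex.normSq_apply]
    ring
  have norm_sq_add : ‖z' * conj w + z * conj w'‖ ^ 2 =
      ‖z'‖ ^ 2 * ‖w‖ ^ 2 + ‖z‖ ^ 2 * ‖w'‖ ^ 2 + 2 * ((z' * conj z) * (w' * conj w)).re := by
    have cross : z' * conj w * conj (z * conj w') = (z' * conj z) * (w' * conj w) := by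
      rw [map_mul, Complex.conj_conj]
      ring
    rw [Complex.sq_norm, Complex.normSq_add, cross]
    simp only [Complex.sq_norm, map_mul, Complex.normSq_conj]
  simp only [lorentzForm, hopfDeriv, quadForm, contactForm, norm_sq_add, Complex.mul_re (z' * _)]
  linear_combination -norm_sq_mul_conj z' z - norm_sq_mul_conj w' w

theorem hopf_fst_cross_hopfDeriv_fst (p v : ℂ × ℂ) :
    (hopf p).1.re * (hopfDeriv p v).1.im - (hopf p).1.im * (hopfDeriv p v).1.re =
      -quadForm p * (v.1 * conj p.1).im + ‖p.1‖ ^ 2 * contactForm p v := by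
  simp only [hopf, hopfDeriv, quadForm, contactForm, Complex.sq_norm, Complex.normSq_apply,
    Complex.add_re, Complex.add_im, Complex.mul_re, Complex.mul_im, Complex.conj_re,
    Complex.conj_im]
  ring

theorem hasDerivAt_hopf {z w : ℝ → ℂ} {z' w' : ℂ} {t : ℝ} (hz : HasDerivAt z z' t)
    (hw : HasDerivAt w w' t) :
    HasDerivAt (fun s ↦ hopf (z s, w s)) (hopfDeriv (z t, w t) (z', w')) t := by
  have hsnd : HasDerivAt (fun s ↦ (‖z s‖ ^ 2 + ‖w s‖ ^ 2) / 2)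
      ((z' * conj (z t)).re + (w' * conj (w t)).re) t := by
    refine ((hz.norm_sq.add hw.norm_sq).div_const 2).congr_deriv ?_
    rw [Complex.inner, Complex.inner]
    ring
  exact (hz.mul hw.star).prodMk hsnd

end AntiDeSitter

open AntiDeSitter in
theorem stmt_13_general {α₁ α₂ : ℝ → ℂ} {t : ℝ} (hα₁ : DifferentiableAt ℝ α₁ t)
    (hα₂ : DifferentiableAt ℝ α₂ t) (hH : ‖α₁ t‖ ^ 2 - ‖α₂ t‖ ^ 2 = -1)
    (hspeed : ‖deriv α₁ t‖ ^ 2 - ‖deriv α₂ t‖ ^ 2 = 1)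
    (hcontact : contactForm (α₁ t, α₂ t) (deriv α₁ t, deriv α₂ t) = 0) {y₁ y₂ y₃ : ℝ → ℝ}
    (hy₁ : ∀ s, y₁ s = (hopf (α₁ s, α₂ s)).1.re) (hy₂ : ∀ s, y₂ s = (hopf (α₁ s, α₂ s)).1.im)
    (hy₃ : ∀ s, y₃ s = (hopf (α₁ s, α₂ s)).2) :
    (y₁ t ^ 2 + y₂ t ^ 2 - y₃ t ^ 2 = -(1 / 4) ∧ 1 / 2 ≤ y₃ t) ∧
      deriv y₁ t ^ 2 + deriv y₂ t ^ 2 - deriv y₃ t ^ 2 = 1 ∧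
      ‖α₁ t‖ ^ 2 = -(1 / 2) + y₃ t ∧
      (deriv α₁ t * (starRingEnd ℂ) (α₁ t)).im = y₁ t * deriv y₂ t - y₂ t * deriv y₁ t := by
  set p := (α₁ t, α₂ t)
  set v := (deriv α₁ t, deriv α₂ t)
  have hp : quadForm p = -1 := hH
  have hv : quadForm v = 1 := hspeed
  have hη := hasDerivAt_hopf hα₁.hasDerivAt hα₂.hasDerivAt
  have hy₁' : deriv y₁ t = (hopfDeriv p v).1.re := by
    rw [funext hy₁]
    exact ((Complex.reCLM ∘L .fst ℝ ℂ ℝ).hasFDerivAt.comp_hasDerivAt t hη).deriv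
  have hy₂' : deriv y₂ t = (hopfDeriv p v).1.im := by
    rw [funext hy₂]
    exact ((Complex.imCLM ∘L .fst ℝ ℂ ℝ).hasFDerivAt.comp_hasDerivAt t hη).deriv
  have hy₃' : deriv y₃ t = (hopfDeriv p v).2 := by
    rw [funext hy₃]
    exact ((ContinuousLinearMap.snd ℝ ℂ ℝ).hasFDerivAt.comp_hasDerivAt t hη).deriv
  have hnorm : ‖α₁ t‖ ^ 2 = -(1 / 2) + y₃ t := by
    rw [hy₃, norm_sq_fst_eq_hopf_snd p, hp]
    ring
  refine ⟨⟨?_, by linarith [sq_nonneg ‖α₁ t‖]⟩, ?_, hnorm, ?_⟩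
  · rw [hy₁, hy₂, hy₃, ← lorentzForm_eq, lorentzForm_hopf, hp]
    norm_num
  · rw [hy₁', hy₂', hy₃', ← lorentzForm_eq, lorentzForm_hopfDeriv, hp, hv, hcontact]
    norm_num
  · rw [hy₁, hy₂, hy₁', hy₂', hopf_fst_cross_hopfDeriv_fst, hp, hcontact]
    ring

/-- The projection `η = (y₁,y₂,y₃)`, `y₁ + iy₂ = α₁·conj α₂`, `y₃ = (|α₁|² + |α₂|²)/2`,
of a unit-speed Legendrian curve `α = (α₁,α₂)` in the anti-de Sitter space H³₁ lies on the
hyperbolic plane H²(−1/2) (with `y₃ ≥ 1/2`), is parametrized by arclength for the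
Lorentzian metric, satisfies `|α₁|² = −1/2 + y₃` and
`Im(α₁'·conj α₁) = y₁y₂' − y₂y₁'`. -/
theorem stmt_13 (I : Set ℝ) (hI : IsOpen I) (α₁ α₂ : ℝ → ℂ)
    (hdiff : ∀ t ∈ I, DifferentiableAt ℝ α₁ t ∧ DifferentiableAt ℝ α₂ t)
    (hH : ∀ t ∈ I, ‖α₁ t‖ ^ 2 - ‖α₂ t‖ ^ 2 = -1)
    (hspeed : ∀ t ∈ I, ‖deriv α₁ t‖ ^ 2 - ‖deriv α₂ t‖ ^ 2 = 1)
    (hLeg : ∀ t ∈ I,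
      deriv α₁ t * (starRingEnd ℂ) (α₁ t) - deriv α₂ t * (starRingEnd ℂ) (α₂ t) = 0)
    (y₁ y₂ y₃ : ℝ → ℝ)
    (hy₁ : ∀ t, y₁ t = (α₁ t * (starRingEnd ℂ) (α₂ t)).re)
    (hy₂ : ∀ t, y₂ t = (α₁ t * (starRingEnd ℂ) (α₂ t)).im)
    (hy₃ : ∀ t, y₃ t = (‖α₁ t‖ ^ 2 + ‖α₂ t‖ ^ 2) / 2) :
    ∀ t ∈ I,
      (y₁ t ^ 2 + y₂ t ^ 2 - y₃ t ^ 2 = -(1 / 4) ∧ 1 / 2 ≤ y₃ t) ∧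
      deriv y₁ t ^ 2 + deriv y₂ t ^ 2 - deriv y₃ t ^ 2 = 1 ∧
      ‖α₁ t‖ ^ 2 = -(1 / 2) + y₃ t ∧
      (deriv α₁ t * (starRingEnd ℂ) (α₁ t)).im = y₁ t * deriv y₂ t - y₂ t * deriv y₁ t :=
  fun t ht ↦ stmt_13_general (hdiff t ht).1 (hdiff t ht).2 (hH t ht) (hspeed t ht)
    (congrArg Complex.im (hLeg t ht)) hy₁ hy₂ hy₃
end

section
/- Let γ = (γ₁, γ₂) : I₁ → ℂ² be a unit-speed Legendrian curve in S³ (|γ₁|² + |γ₂|² = 1, |γ₁'|² + |γ₂'|² = 1, γ₁'·conj(γ₁) + γ₂'·conj(γ₂) = 0) and let α = (α₁, α₂) : I₂ → ℂ² be a unit-speed Legendrian curve in H³₁ (|α₁|² − |α₂|² = −1, |α₁'|² − |α₂'|² = 1, α₁'·conj(α₁) − α₂'·conj(α₂) = 0). Define φ : I₁ × I₂ → ℂ² by φ(s,t) = (γ₁(s)·α₁(t), γ₂(s)·α₂(t)). Then for all (s,t): the Hermitian product (∂ₛφ, ∂ₜφ) = 0, and (∂ₛφ, ∂ₛφ) =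 (∂ₜφ, ∂ₜφ) = |γ₁(s)|² + |α₁(t)|². Hence φ is a conformal Lagrangian immersion into ℂ² with induced metric g = (|γ₁|² + |α₁|²)·(ds² + dt²). -/
/-- The Hermitian product on ℂ²: (z,w) = z₁·conj w₁ + z₂·conj w₂. -/
noncomputable def herm2 (z w : ℂ × ℂ) : ℂ :=
  z.1 * (starRingEnd ℂ) w.1 + z.2 * (starRingEnd ℂ) w.2

/-!
If `v` and `z` are Hermitian orthogonal unit vectors of `ℂ²`, the matrix with rows `z` and `v` is
unitary, so its columns have unit length as well; hence `|v₁| = |z₂|` and `|v₂| = |z₁|`. The same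
relations hold in the indefinite signature of `H³₁`. The map `φ` is the product of the two curves in
the algebra `ℂ × ℂ`, so `∂ₛφ = γ' * α` and `∂ₜφ = γ * α'`, and both have squared length
`|γ₂|²|α₁|² + |γ₁|²|α₂|²`, while the opposite signs in the two Legendrian conditions make the two
terms of `(∂ₛφ, ∂ₜφ)` cancel.
-/

open ComplexConjugate

section ProductOfCurves

variable {𝕜 𝔸 : Type*} [NontriviallyNormedField 𝕜] [NormedRing 𝔸] [NormedAlgebra 𝕜 𝔸]

theorem hasFDerivAt_mul_fst_snd {f g : 𝕜 → 𝔸} {f' g' : 𝔸} {s t : 𝕜}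
    (hf : HasDerivAt f f' s) (hg : HasDerivAt g g' t) :
    HasFDerivAt (fun p : 𝕜 × 𝕜 ↦ f p.1 * g p.2)
      ((ContinuousLinearMap.fst 𝕜 𝕜 𝕜).smulRight (f' * g t) +
        (ContinuousLinearMap.snd 𝕜 𝕜 𝕜).smulRight (f s * g')) (s, t) := by
  have hf_fst : HasFDerivAt (fun p : 𝕜 × 𝕜 ↦ f p.1) _ (s, t) :=
    hf.hasFDerivAt.comp (s, t) hasFDerivAt_fst
  have hg_snd : HasFDerivAt (fun p : 𝕜 × 𝕜 ↦ g p.2) _ (s, t) :=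
    hg.hasFDerivAt.comp (s, t) hasFDerivAt_snd
  refine (hf_fst.mul' hg_snd).congr_fderiv ?_
  ext <;> simp

theorem fderiv_mul_fst_snd_apply_one_zero {f g : 𝕜 → 𝔸} {f' g' : 𝔸} {s t : 𝕜}
    (hf : HasDerivAt f f' s) (hg : HasDerivAt g g' t) :
    fderiv 𝕜 (fun p : 𝕜 × 𝕜 ↦ f p.1 * g p.2) (s, t) (1, 0) = f' * g t := by
  simp [(hasFDerivAt_mul_fst_snd hf hg).fderiv]

theorem fderiv_mul_fst_snd_apply_zero_one {f g : 𝕜 → 𝔸} {f' g' : 𝔸} {s t : 𝕜}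
    (hf : HasDerivAt f f' s) (hg : HasDerivAt g g' t) :
    fderiv 𝕜 (fun p : 𝕜 × 𝕜 ↦ f p.1 * g p.2) (s, t) (0, 1) = f s * g' := by
  simp [(hasFDerivAt_mul_fst_snd hf hg).fderiv]

end ProductOfCurves

theorem herm2_self (z : ℂ × ℂ) : herm2 z z = ((‖z.1‖ ^ 2 + ‖z.2‖ ^ 2 : ℝ) : ℂ) := by
  simp [herm2, Complex.mul_conj']

/-- A point `z` of the unit quadric `|z₁|² + σ|z₂|² = σ` and a unit tangent vector `v` at `z` that
is Hermitian orthogonal to `z`, all with respect to the form `z₁ conj w₁ + σ z₂ conj w₂` with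
`σ = ±1`: the position and velocity of a unit-speed Legendrian curve. The quadric is `S³` for
`σ = 1` and `H³₁` for `σ = -1`. -/
structure IsLegendrianFrame (σ : ℝ) (z v : ℂ × ℂ) : Prop where
  sign_sq : σ ^ 2 = 1
  position : ‖z.1‖ ^ 2 + σ * ‖z.2‖ ^ 2 = σ
  velocity : ‖v.1‖ ^ 2 + σ * ‖v.2‖ ^ 2 = 1
  legendrian : v.1 * conj z.1 + σ * (v.2 * conj z.2) = 0

namespace IsLegendrianFrame

variable {σ : ℝ} {z v w u : ℂ × ℂ}

theorem norm_sq_mul_norm_sq (h : IsLegendrianFrame σ z v) :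
    ‖v.1‖ ^ 2 * ‖z.1‖ ^ 2 = ‖v.2‖ ^ 2 * ‖z.2‖ ^ 2 := by
  have norm_eq := congrArg (‖·‖ ^ 2) (eq_neg_of_add_eq_zero_left h.legendrian)
  simpa [mul_pow, h.sign_sq] using norm_eq

theorem norm_sq_velocity_fst (h : IsLegendrianFrame σ z v) : ‖v.1‖ ^ 2 = ‖z.2‖ ^ 2 := by
  calc ‖v.1‖ ^ 2
      = σ * (‖v.1‖ ^ 2 * (‖z.1‖ ^ 2 + σ * ‖z.2‖ ^ 2)) := by
        rw [h.position]
        linear_combination -‖v.1‖ ^ 2 * h.sign_sq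
    _ = (‖v.1‖ ^ 2 + σ * ‖v.2‖ ^ 2) * ‖z.2‖ ^ 2 := by
        linear_combination σ * h.norm_sq_mul_norm_sq + ‖v.1‖ ^ 2 * ‖z.2‖ ^ 2 * h.sign_sq
    _ = ‖z.2‖ ^ 2 := by rw [h.velocity, one_mul]

theorem norm_sq_velocity_snd (h : IsLegendrianFrame σ z v) : ‖v.2‖ ^ 2 = ‖z.1‖ ^ 2 := by
  calc ‖v.2‖ ^ 2
      = σ * (1 - ‖v.1‖ ^ 2) := by linear_combination σ * h.velocity - ‖v.2‖ ^ 2 * h.sign_sq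
    _ = σ - σ * ‖z.2‖ ^ 2 := by rw [h.norm_sq_velocity_fst, mul_sub, mul_one]
    _ = ‖z.1‖ ^ 2 := by linear_combination -h.position

theorem norm_sq_position_snd (h : IsLegendrianFrame σ z v) :
    ‖z.2‖ ^ 2 = 1 - σ * ‖z.1‖ ^ 2 := by
  linear_combination σ * h.position - (‖z.2‖ ^ 2 - 1) * h.sign_sq

theorem herm2_velocity_mul_mul_velocity (h : IsLegendrianFrame σ z v)
    (h' : IsLegendrianFrame (-σ) w u) : herm2 (v * w) (z * u) = 0 := by
  have sign_sq : (σ : ℂ) ^ 2 = 1 := mod_cast h.sign_sq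
  have conj_legendrian : w.1 * conj u.1 = σ * (w.2 * conj u.2) := by
    have conj_eq := congrArg conj h'.legendrian
    simp only [map_add, map_mul, map_zero, Complex.ofReal_neg, map_neg, Complex.conj_conj,
      Complex.conj_ofReal] at conj_eq
    linear_combination conj_eq
  calc herm2 (v * w) (z * u)
      = (v.1 * conj z.1) * (w.1 * conj u.1) + (v.2 * conj z.2) * (w.2 * conj u.2) := by
        simp only [herm2, Prod.fst_mul, Prod.snd_mul, map_mul]
        ring
    _ = (v.1 * conj z.1 + σ * (v.2 * conj z.2)) * (σ * (w.2 * conj u.2)) := by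
        rw [conj_legendrian]
        linear_combination -(v.2 * conj z.2) * (w.2 * conj u.2) * sign_sq
    _ = 0 := by rw [h.legendrian, zero_mul]

theorem herm2_velocity_mul_self (h : IsLegendrianFrame σ z v) (h' : IsLegendrianFrame (-σ) w u) :
    herm2 (v * w) (v * w) = ((‖z.1‖ ^ 2 + ‖w.1‖ ^ 2 : ℝ) : ℂ) := by
  rw [herm2_self, Complex.ofReal_inj]
  calc ‖(v * w).1‖ ^ 2 + ‖(v * w).2‖ ^ 2
      = ‖z.2‖ ^ 2 * ‖w.1‖ ^ 2 + ‖z.1‖ ^ 2 * ‖w.2‖ ^ 2 := by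
        simp only [Prod.fst_mul, Prod.snd_mul, norm_mul, mul_pow, h.norm_sq_velocity_fst,
          h.norm_sq_velocity_snd]
    _ = ‖z.1‖ ^ 2 + ‖w.1‖ ^ 2 := by
        rw [h.norm_sq_position_snd, h'.norm_sq_position_snd]
        ring

theorem herm2_mul_velocity_self (h : IsLegendrianFrame σ z v) (h' : IsLegendrianFrame (-σ) w u) :
    herm2 (z * u) (z * u) = ((‖z.1‖ ^ 2 + ‖w.1‖ ^ 2 : ℝ) : ℂ) := by
  have h_neg_neg : IsLegendrianFrame (- -σ) z v := by rwa [neg_neg]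
  rw [mul_comm z u, h'.herm2_velocity_mul_self h_neg_neg, add_comm]

end IsLegendrianFrame

theorem stmt_15_general {σ : ℝ} {γ α : ℝ → ℂ × ℂ} {γ' α' : ℂ × ℂ} {s t : ℝ}
    (hγ : HasDerivAt γ γ' s) (hα : HasDerivAt α α' t)
    (hγ_frame : IsLegendrianFrame σ (γ s) γ') (hα_frame : IsLegendrianFrame (-σ) (α t) α') :
    let dφ := fderiv ℝ (fun p : ℝ × ℝ ↦ γ p.1 * α p.2) (s, t)
    herm2 (dφ (1, 0)) (dφ (0, 1)) = 0 ∧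
      herm2 (dφ (1, 0)) (dφ (1, 0)) = ((‖(γ s).1‖ ^ 2 + ‖(α t).1‖ ^ 2 : ℝ) : ℂ) ∧
      herm2 (dφ (0, 1)) (dφ (0, 1)) = ((‖(γ s).1‖ ^ 2 + ‖(α t).1‖ ^ 2 : ℝ) : ℂ) := by
  intro dφ
  have dφ_s : dφ (1, 0) = γ' * α t := fderiv_mul_fst_snd_apply_one_zero hγ hα
  have dφ_t : dφ (0, 1) = γ s * α' := fderiv_mul_fst_snd_apply_zero_one hγ hα
  rw [dφ_s, dφ_t]
  exact ⟨hγ_frame.herm2_velocity_mul_mul_velocity hα_frame,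
    hγ_frame.herm2_velocity_mul_self hα_frame, hγ_frame.herm2_mul_velocity_self hα_frame⟩

/-- For a unit-speed Legendrian curve `γ` in S³ and a unit-speed Legendrian curve `α` in the
anti-de Sitter space H³₁, the map `φ(s,t) = (γ₁(s)α₁(t), γ₂(s)α₂(t))` satisfies
`(∂ₛφ,∂ₜφ) = 0` and `(∂ₛφ,∂ₛφ) = (∂ₜφ,∂ₜφ) = |γ₁(s)|² + |α₁(t)|²`: it is a conformal
Lagrangian immersion with induced metric `(|γ₁|² + |α₁|²)(ds² + dt²)`. -/
theorem stmt_15 (I₁ I₂ : Set ℝ) (hI₁ : IsOpen I₁) (hI₂ : IsOpen I₂)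
    (γ₁ γ₂ α₁ α₂ : ℝ → ℂ)
    (hγd : ∀ s ∈ I₁, DifferentiableAt ℝ γ₁ s ∧ DifferentiableAt ℝ γ₂ s)
    (hαd : ∀ t ∈ I₂, DifferentiableAt ℝ α₁ t ∧ DifferentiableAt ℝ α₂ t)
    (hγS : ∀ s ∈ I₁, ‖γ₁ s‖ ^ 2 + ‖γ₂ s‖ ^ 2 = 1)
    (hγspeed : ∀ s ∈ I₁, ‖deriv γ₁ s‖ ^ 2 + ‖deriv γ₂ s‖ ^ 2 = 1)
    (hγLeg : ∀ s ∈ I₁,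
      deriv γ₁ s * (starRingEnd ℂ) (γ₁ s) + deriv γ₂ s * (starRingEnd ℂ) (γ₂ s) = 0)
    (hαH : ∀ t ∈ I₂, ‖α₁ t‖ ^ 2 - ‖α₂ t‖ ^ 2 = -1)
    (hαspeed : ∀ t ∈ I₂, ‖deriv α₁ t‖ ^ 2 - ‖deriv α₂ t‖ ^ 2 = 1)
    (hαLeg : ∀ t ∈ I₂,
      deriv α₁ t * (starRingEnd ℂ) (α₁ t) - deriv α₂ t * (starRingEnd ℂ) (α₂ t) = 0)
    (φ : ℝ × ℝ → ℂ × ℂ)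
    (hφ : ∀ p : ℝ × ℝ, φ p = (γ₁ p.1 * α₁ p.2, γ₂ p.1 * α₂ p.2)) :
    ∀ s ∈ I₁, ∀ t ∈ I₂,
      herm2 (fderiv ℝ φ (s, t) (1, 0)) (fderiv ℝ φ (s, t) (0, 1)) = 0 ∧
      herm2 (fderiv ℝ φ (s, t) (1, 0)) (fderiv ℝ φ (s, t) (1, 0))
        = ((‖γ₁ s‖ ^ 2 + ‖α₁ t‖ ^ 2 : ℝ) : ℂ) ∧
      herm2 (fderiv ℝ φ (s, t) (0, 1)) (fderiv ℝ φ (s, t) (0, 1))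
        = ((‖γ₁ s‖ ^ 2 + ‖α₁ t‖ ^ 2 : ℝ) : ℂ) := by
  intro s hs t ht
  have hγ : HasDerivAt (fun x ↦ (γ₁ x, γ₂ x)) _ s :=
    (hγd s hs).1.hasDerivAt.prodMk (hγd s hs).2.hasDerivAt
  have hα : HasDerivAt (fun x ↦ (α₁ x, α₂ x)) _ t :=
    (hαd t ht).1.hasDerivAt.prodMk (hαd t ht).2.hasDerivAt
  have hγ_frame : IsLegendrianFrame 1 (γ₁ s, γ₂ s) (deriv γ₁ s, deriv γ₂ s) :=
    ⟨one_pow 2, by simpa using hγS s hs, by simpa using hγspeed s hs, by simpa using hγLeg s hs⟩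
  have hα_frame : IsLegendrianFrame (-1) (α₁ t, α₂ t) (deriv α₁ t, deriv α₂ t) :=
    ⟨neg_one_sq, by simpa [sub_eq_add_neg] using hαH t ht,
      by simpa [sub_eq_add_neg] using hαspeed t ht, by simpa [sub_eq_add_neg] using hαLeg t ht⟩
  obtain rfl : φ = fun p ↦ (γ₁ p.1, γ₂ p.1) * (α₁ p.2, α₂ p.2) := funext hφ
  simpa only using stmt_15_general hγ hα hγ_frame hα_frame
end

section
/- Let γ = (γ₁, γ₂) : I₁ → ℂ² be a unit-speed Legendrian curve in S³ (|γ₁|² + |γ₂|² = 1, |γ₁'|² + |γ₂'|² = 1, γ₁'·conj(γ₁) + γ₂'·conj(γ₂) = 0) and α = (α₁, α₂) : I₂ → ℂ² a unit-speed Legendrian curve in H³₁ (|α₁|² − |α₂|² = −1, |α₁'|² − |α₂'|² = 1, α₁'·conj(α₁) − α₂'·conj(α₂) = 0), and let φ(s,t) = (γ₁(s)α₁(t), γ₂(s)α₂(t)). Then the complex determinant of the partial derivatives of φ factorizes as det_ℂ(∂ₛφ, ∂ₜφ) = (γ₁'(s)α₁(t))·(γ₂(s)α₂'(t)) − (γ₂'(s)α₂(t))·(γ₁(s)α₁'(t))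 = (|γ₁(s)|² + |α₁(t)|²)·(γ₁(s)γ₂'(s) − γ₂(s)γ₁'(s))·(α₁(t)α₂'(t) − α₂(t)α₁'(t)). (This encodes the relation β_φ(s,t) = β_γ(s) + β_α(t) + π between the Lagrangian angle of the surface φ = γ ⊙ α and the Legendrian angles of the curves γ and α.) -/
/-!
If `x · c = 1` and `p · c = 0` in `R²`, then `p` is the multiple of `(-c₂, c₁)` by `det (x, p)`.
For a Legendrian curve `γ` on the quadric `ε |z₁|² + |z₂|² = 1`, take `x = γ`, `p = γ'` and
`c = (ε conj γ₁, conj γ₂)`: the velocity is determined by `γ` and by `γ₁ γ₂' - γ₂ γ₁'`.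
Substituting this for both curves in the Jacobian of their componentwise product leaves the two
determinants times `-(1 - ε |γ₁|²) δ |α₁|² + ε |γ₁|² (1 - δ |α₁|²) = ε |γ₁|² - δ |α₁|²`.
-/

open scoped ComplexConjugate

section Algebra

variable {R : Type*} [CommRing R]

theorem eq_det_mul_of_dot_eq_one_of_dot_eq_zero {x₁ x₂ p₁ p₂ c₁ c₂ : R}
    (hx : x₁ * c₁ + x₂ * c₂ = 1) (hp : p₁ * c₁ + p₂ * c₂ = 0) :
    p₁ = -((x₁ * p₂ - x₂ * p₁) * c₂) ∧ p₂ = (x₁ * p₂ - x₂ * p₁) * c₁ := by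
  constructor
  · linear_combination x₁ * hp - p₁ * hx
  · linear_combination x₂ * hp - p₂ * hx

theorem det_mul_mul_eq_of_dot_eq_one_of_dot_eq_zero {x₁ x₂ p₁ p₂ c₁ c₂ y₁ y₂ q₁ q₂ d₁ d₂ : R}
    (hx : x₁ * c₁ + x₂ * c₂ = 1) (hp : p₁ * c₁ + p₂ * c₂ = 0)
    (hy : y₁ * d₁ + y₂ * d₂ = 1) (hq : q₁ * d₁ + q₂ * d₂ = 0) :
    (p₁ * y₁) * (x₂ * q₂) - (p₂ * y₂) * (x₁ * q₁) =
      (x₁ * c₁ - y₁ * d₁) * (x₁ * p₂ - x₂ * p₁) * (y₁ * q₂ - y₂ * q₁) := by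
  obtain ⟨hp₁, hp₂⟩ := eq_det_mul_of_dot_eq_one_of_dot_eq_zero hx hp
  obtain ⟨hq₁, hq₂⟩ := eq_det_mul_of_dot_eq_one_of_dot_eq_zero hy hq
  set w := x₁ * p₂ - x₂ * p₁
  set v := y₁ * q₂ - y₂ * q₁
  calc (p₁ * y₁) * (x₂ * q₂) - (p₂ * y₂) * (x₁ * q₁)
      = (-(x₂ * c₂) * (y₁ * d₁) + (x₁ * c₁) * (y₂ * d₂)) * w * v := by
        rw [hp₁, hp₂, hq₁, hq₂]; ring
    _ = (-(1 - x₁ * c₁) * (y₁ * d₁) + (x₁ * c₁) * (1 - y₁ * d₁)) * w * v := by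
        rw [eq_sub_of_add_eq' hx, eq_sub_of_add_eq' hy]
    _ = (x₁ * c₁ - y₁ * d₁) * w * v := by ring

end Algebra

/-- The componentwise product `γ ⊙ α : (s, t) ↦ (γ₁ s * α₁ t, γ₂ s * α₂ t)` of two curves in `A²`,
each given by its two coordinate functions. -/
def curveProduct {S T A : Type*} [Mul A] (γ₁ γ₂ : S → A) (α₁ α₂ : T → A) (p : S × T) : A × A :=
  (γ₁ p.1 * α₁ p.2, γ₂ p.1 * α₂ p.2)

section Calculus

variable {𝕜 E F A : Type*} [NontriviallyNormedField 𝕜]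
  [NormedAddCommGroup E] [NormedSpace 𝕜 E] [NormedAddCommGroup F] [NormedSpace 𝕜 F]
  [NormedRing A] [NormedAlgebra 𝕜 A]

theorem fderiv_comp_fst_mul_comp_snd_apply {f : E → A} {g : F → A} {x : E} {y : F}
    (hf : DifferentiableAt 𝕜 f x) (hg : DifferentiableAt 𝕜 g y) (v : E × F) :
    fderiv 𝕜 (fun p : E × F ↦ f p.1 * g p.2) (x, y) v =
      fderiv 𝕜 f x v.1 * g y + f x * fderiv 𝕜 g y v.2 := by
  have hf' : HasFDerivAt (fun p : E × F ↦ f p.1) _ (x, y) :=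
    hf.hasFDerivAt.comp (x, y) hasFDerivAt_fst
  have hg' : HasFDerivAt (fun p : E × F ↦ g p.2) _ (x, y) :=
    hg.hasFDerivAt.comp (x, y) hasFDerivAt_snd
  rw [(hf'.fun_mul' hg').fderiv]
  simp [add_comm]

theorem fderiv_curveProduct_apply {γ₁ γ₂ α₁ α₂ : 𝕜 → A} {s t : 𝕜}
    (hγ₁ : DifferentiableAt 𝕜 γ₁ s) (hγ₂ : DifferentiableAt 𝕜 γ₂ s)
    (hα₁ : DifferentiableAt 𝕜 α₁ t) (hα₂ : DifferentiableAt 𝕜 α₂ t) (v : 𝕜 × 𝕜) :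
    fderiv 𝕜 (curveProduct γ₁ γ₂ α₁ α₂) (s, t) v =
      (v.1 • deriv γ₁ s * α₁ t + γ₁ s * v.2 • deriv α₁ t,
        v.1 • deriv γ₂ s * α₂ t + γ₂ s * v.2 • deriv α₂ t) := by
  have h₁ : DifferentiableAt 𝕜 (fun p : 𝕜 × 𝕜 ↦ γ₁ p.1 * α₁ p.2) (s, t) :=
    (hγ₁.comp (s, t) differentiableAt_fst).mul (hα₁.comp (s, t) differentiableAt_snd)
  have h₂ : DifferentiableAt 𝕜 (fun p : 𝕜 × 𝕜 ↦ γ₂ p.1 * α₂ p.2) (s, t) :=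
    (hγ₂.comp (s, t) differentiableAt_fst).mul (hα₂.comp (s, t) differentiableAt_snd)
  have h_pair : fderiv 𝕜 (curveProduct γ₁ γ₂ α₁ α₂) (s, t) = _ := h₁.fderiv_prodMk h₂
  simp only [h_pair, ContinuousLinearMap.prod_apply, fderiv_comp_fst_mul_comp_snd_apply hγ₁ hα₁,
    fderiv_comp_fst_mul_comp_snd_apply hγ₂ hα₂, fderiv_eq_smul_deriv]

end Calculus

/-- The curve `(z₁, z₂)` in `ℂ²` is differentiable at `s`, lies at `s` on the quadric
`ε |z₁|² + |z₂|² = 1`, and has Legendrian velocity there: orthogonal to the position for the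
Hermitian form `ε z₁ conj w₁ + z₂ conj w₂`. The sphere `S³` is `ε = 1`; the anti-de Sitter space
`H³₁`, usually written `|z₁|² - |z₂|² = -1`, is `ε = -1`. -/
structure IsLegendrianAt (ε : ℝ) (z₁ z₂ : ℝ → ℂ) (s : ℝ) : Prop where
  differentiableAt_fst : DifferentiableAt ℝ z₁ s
  differentiableAt_snd : DifferentiableAt ℝ z₂ s
  quadric : ε * ‖z₁ s‖ ^ 2 + ‖z₂ s‖ ^ 2 = 1
  legendrian : ε * (deriv z₁ s * conj (z₁ s)) + deriv z₂ s * conj (z₂ s) = 0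

namespace IsLegendrianAt

variable {ε : ℝ} {z₁ z₂ : ℝ → ℂ} {s : ℝ}

theorem of_sphere (hd : DifferentiableAt ℝ z₁ s ∧ DifferentiableAt ℝ z₂ s)
    (hS : ‖z₁ s‖ ^ 2 + ‖z₂ s‖ ^ 2 = 1)
    (hLeg : deriv z₁ s * conj (z₁ s) + deriv z₂ s * conj (z₂ s) = 0) :
    IsLegendrianAt 1 z₁ z₂ s where
  differentiableAt_fst := hd.1
  differentiableAt_snd := hd.2
  quadric := by rwa [one_mul]
  legendrian := by rwa [Complex.ofReal_one, one_mul]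

theorem of_antiDeSitter (hd : DifferentiableAt ℝ z₁ s ∧ DifferentiableAt ℝ z₂ s)
    (hH : ‖z₁ s‖ ^ 2 - ‖z₂ s‖ ^ 2 = -1)
    (hLeg : deriv z₁ s * conj (z₁ s) - deriv z₂ s * conj (z₂ s) = 0) :
    IsLegendrianAt (-1) z₁ z₂ s where
  differentiableAt_fst := hd.1
  differentiableAt_snd := hd.2
  quadric := by linear_combination -hH
  legendrian := by push_cast; linear_combination -hLeg

theorem position_dot_eq_one (h : IsLegendrianAt ε z₁ z₂ s) :
    z₁ s * (ε * conj (z₁ s)) + z₂ s * conj (z₂ s) = 1 := by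
  rw [mul_left_comm, Complex.mul_conj', Complex.mul_conj']
  exact_mod_cast h.quadric

theorem velocity_dot_eq_zero (h : IsLegendrianAt ε z₁ z₂ s) :
    deriv z₁ s * (ε * conj (z₁ s)) + deriv z₂ s * conj (z₂ s) = 0 := by
  rw [mul_left_comm]
  exact h.legendrian

end IsLegendrianAt

theorem stmt_16_general {ε δ : ℝ} {γ₁ γ₂ α₁ α₂ : ℝ → ℂ} {s t : ℝ}
    (hγ : IsLegendrianAt ε γ₁ γ₂ s) (hα : IsLegendrianAt δ α₁ α₂ t) :
    (fderiv ℝ (curveProduct γ₁ γ₂ α₁ α₂) (s, t) (1, 0)).1 *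
          (fderiv ℝ (curveProduct γ₁ γ₂ α₁ α₂) (s, t) (0, 1)).2
        - (fderiv ℝ (curveProduct γ₁ γ₂ α₁ α₂) (s, t) (1, 0)).2 *
          (fderiv ℝ (curveProduct γ₁ γ₂ α₁ α₂) (s, t) (0, 1)).1
      = (deriv γ₁ s * α₁ t) * (γ₂ s * deriv α₂ t)
          - (deriv γ₂ s * α₂ t) * (γ₁ s * deriv α₁ t) ∧
    (deriv γ₁ s * α₁ t) * (γ₂ s * deriv α₂ t)
        - (deriv γ₂ s * α₂ t) * (γ₁ s * deriv α₁ t)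
      = ((ε * ‖γ₁ s‖ ^ 2 - δ * ‖α₁ t‖ ^ 2 : ℝ) : ℂ) *
          (γ₁ s * deriv γ₂ s - γ₂ s * deriv γ₁ s) *
          (α₁ t * deriv α₂ t - α₂ t * deriv α₁ t) := by
  constructor
  · simp only [fderiv_curveProduct_apply hγ.differentiableAt_fst hγ.differentiableAt_snd
      hα.differentiableAt_fst hα.differentiableAt_snd, one_smul, zero_smul, zero_mul, mul_zero,
      add_zero, zero_add]
  · have h_factor : ((ε * ‖γ₁ s‖ ^ 2 - δ * ‖α₁ t‖ ^ 2 : ℝ) : ℂ) =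
        γ₁ s * (ε * conj (γ₁ s)) - α₁ t * (δ * conj (α₁ t)) := by
      rw [mul_left_comm, mul_left_comm (α₁ t), Complex.mul_conj', Complex.mul_conj']
      push_cast
      rfl
    rw [h_factor]
    exact det_mul_mul_eq_of_dot_eq_one_of_dot_eq_zero hγ.position_dot_eq_one
      hγ.velocity_dot_eq_zero hα.position_dot_eq_one hα.velocity_dot_eq_zero

/-- For a unit-speed Legendrian curve `γ` in S³ and a unit-speed Legendrian curve `α` in
H³₁, the surface `φ(s,t) = (γ₁(s)α₁(t), γ₂(s)α₂(t))` has complex Jacobian determinant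
`det_ℂ(∂ₛφ, ∂ₜφ) = (γ₁'α₁)(γ₂α₂') − (γ₂'α₂)(γ₁α₁')
  = (|γ₁|² + |α₁|²)(γ₁γ₂' − γ₂γ₁')(α₁α₂' − α₂α₁')`,
encoding `β_φ = β_γ + β_α + π`. -/
theorem stmt_16 (I₁ I₂ : Set ℝ) (hI₁ : IsOpen I₁) (hI₂ : IsOpen I₂)
    (γ₁ γ₂ α₁ α₂ : ℝ → ℂ)
    (hγd : ∀ s ∈ I₁, DifferentiableAt ℝ γ₁ s ∧ DifferentiableAt ℝ γ₂ s)
    (hαd : ∀ t ∈ I₂, DifferentiableAt ℝ α₁ t ∧ DifferentiableAt ℝ α₂ t)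
    (hγS : ∀ s ∈ I₁, ‖γ₁ s‖ ^ 2 + ‖γ₂ s‖ ^ 2 = 1)
    (hγspeed : ∀ s ∈ I₁, ‖deriv γ₁ s‖ ^ 2 + ‖deriv γ₂ s‖ ^ 2 = 1)
    (hγLeg : ∀ s ∈ I₁,
      deriv γ₁ s * (starRingEnd ℂ) (γ₁ s) + deriv γ₂ s * (starRingEnd ℂ) (γ₂ s) = 0)
    (hαH : ∀ t ∈ I₂, ‖α₁ t‖ ^ 2 - ‖α₂ t‖ ^ 2 = -1)
    (hαspeed : ∀ t ∈ I₂, ‖deriv α₁ t‖ ^ 2 - ‖deriv α₂ t‖ ^ 2 = 1)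
    (hαLeg : ∀ t ∈ I₂,
      deriv α₁ t * (starRingEnd ℂ) (α₁ t) - deriv α₂ t * (starRingEnd ℂ) (α₂ t) = 0)
    (φ : ℝ × ℝ → ℂ × ℂ)
    (hφ : ∀ p : ℝ × ℝ, φ p = (γ₁ p.1 * α₁ p.2, γ₂ p.1 * α₂ p.2)) :
    ∀ s ∈ I₁, ∀ t ∈ I₂,
      (fderiv ℝ φ (s, t) (1, 0)).1 * (fderiv ℝ φ (s, t) (0, 1)).2
          - (fderiv ℝ φ (s, t) (1, 0)).2 * (fderiv ℝ φ (s, t) (0, 1)).1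
        = (deriv γ₁ s * α₁ t) * (γ₂ s * deriv α₂ t)
            - (deriv γ₂ s * α₂ t) * (γ₁ s * deriv α₁ t) ∧
      (deriv γ₁ s * α₁ t) * (γ₂ s * deriv α₂ t)
          - (deriv γ₂ s * α₂ t) * (γ₁ s * deriv α₁ t)
        = ((‖γ₁ s‖ ^ 2 + ‖α₁ t‖ ^ 2 : ℝ) : ℂ) *
            (γ₁ s * deriv γ₂ s - γ₂ s * deriv γ₁ s) *
            (α₁ t * deriv α₂ t - α₂ t * deriv α₁ t) := by
  intro s hs t ht
  obtain rfl : φ = curveProduct γ₁ γ₂ α₁ α₂ := funext hφ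
  simpa only [one_mul, neg_one_mul, sub_neg_eq_add] using stmt_16_general
    (.of_sphere (hγd s hs) (hγS s hs) (hγLeg s hs))
    (.of_antiDeSitter (hαd t ht) (hαH t ht) (hαLeg t ht))
end

section
/- For δ > 0 define α : ℝ → ℂ² by α(t) = (sinh δ · e^{i·coth δ·t}, cosh δ · e^{i·tanh δ·t}). Then α is a unit-speed Legendrian curve in the anti-de Sitter space H³₁: |α₁|² − |α₂|² = −1, |α₁'|² − |α₂'|² = 1 and α₁'·conj(α₁) − α₂'·conj(α₂) = 0 for all t ∈ ℝ. Moreover α is periodic (there exists T > 0 with α(t+T) = α(t) for all t) if and only if (tanh δ)² is a rational number. -/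
/-!
Each coordinate of the curve is a uniform circular motion `t ↦ a e^{ikt}`, whose derivative is `ik`
times itself. The Legendrian and unit-speed conditions thus become algebraic relations between the
radii `a`, `b` and the frequencies `k`, `l`: for `(a, k) = (sinh δ, coth δ)` and
`(b, l) = (cosh δ, tanh δ)` they follow from `cosh² δ - sinh² δ = 1` and `k a = b`, `l b = a`.
The two motions have periods `2πℤ / k` and `2πℤ / l`, which share a nonzero element iff `l / k` is
rational, and here `l / k = tanh δ / coth δ = tanh² δ`.
-/

open Function

theorem exists_pos_periodic_iff_exists_ne_zero {G β : Type*} [AddCommGroup G] [LinearOrder G]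
    [IsOrderedAddMonoid G] {f : G → β} : (∃ T > 0, Periodic f T) ↔ ∃ T ≠ 0, Periodic f T := by
  refine ⟨fun ⟨T, hT, hf⟩ ↦ ⟨T, hT.ne', hf⟩, fun ⟨T, hT, hf⟩ ↦ ⟨|T|, abs_pos.2 hT, ?_⟩⟩
  obtain h | h := abs_choice T <;> rw [h]
  exacts [hf, hf.neg]

theorem exists_ne_zero_int_multiples_iff_div_eq_ratCast {K : Type*} [Field K] [CharZero K]
    {k c : K} (l : K) (hk : k ≠ 0) (hc : c ≠ 0) :
    (∃ T ≠ 0, (∃ m : ℤ, k * T = m * c) ∧ ∃ n : ℤ, l * T = n * c) ↔ ∃ q : ℚ, l / k = q := by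
  constructor
  · rintro ⟨T, hT, ⟨m, hm⟩, n, hn⟩
    refine ⟨n / m, ?_⟩
    calc l / k = l * T / (k * T) := (mul_div_mul_right l k hT).symm
      _ = n * c / (m * c) := by rw [hm, hn]
      _ = n / m := mul_div_mul_right _ _ hc
      _ = ((n / m : ℚ) : K) := by push_cast; rfl
  · rintro ⟨q, hq⟩
    have hden : (q.den : K) ≠ 0 := Nat.cast_ne_zero.2 q.den_ne_zero
    refine ⟨q.den * c / k, div_ne_zero (mul_ne_zero hden hc) hk, ⟨q.den, ?_⟩, q.num, ?_⟩
    · rw [mul_div_cancel₀ _ hk, Int.cast_natCast]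
    · have hnum : (q : K) * q.den = q.num := by exact_mod_cast Rat.mul_den_eq_num q
      calc l * (q.den * c / k) = l / k * q.den * c := by ring
        _ = q.num * c := by rw [hq, hnum]

section CircularMotion

variable (a k t : ℝ)

theorem hasDerivAt_circleMap_mul_left (c : ℂ) :
    HasDerivAt (fun s ↦ circleMap c a (k * s)) (k * (circleMap 0 a (k * t) * Complex.I)) t := by
  have hangle : HasDerivAt (fun s ↦ k * s) k t := by
    simpa only [id, mul_one] using (hasDerivAt_id t).const_mul k
  exact (hasDerivAt_circleMap c a (k * t)).scomp t hangle

theorem norm_deriv_circleMap_mul_left_sq (c : ℂ) :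
    ‖deriv (fun s ↦ circleMap c a (k * s)) t‖ ^ 2 = (k * a) ^ 2 := by
  simp [(hasDerivAt_circleMap_mul_left a k t c).deriv, mul_pow]

theorem deriv_circleMap_mul_left_mul_conj :
    deriv (fun s ↦ circleMap 0 a (k * s)) t * starRingEnd ℂ (circleMap 0 a (k * t)) =
      (k * a ^ 2 : ℝ) * Complex.I := by
  have hsq : circleMap 0 a (k * t) * starRingEnd ℂ (circleMap 0 a (k * t)) = (a ^ 2 : ℝ) := by
    rw [Complex.mul_conj', norm_circleMap_zero, ← Complex.ofReal_pow, sq_abs]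
  rw [(hasDerivAt_circleMap_mul_left a k t 0).deriv, Complex.ofReal_mul, ← hsq]
  ring

variable {a} in
theorem periodic_circleMap_mul_left_iff (ha : a ≠ 0) (c : ℂ) (T : ℝ) :
    Periodic (fun s ↦ circleMap c a (k * s)) T ↔ ∃ n : ℤ, k * T = n * (2 * Real.pi) := by
  constructor
  · intro h
    obtain ⟨n, hn⟩ := (circleMap_eq_circleMap_iff c ha).1 (h 0)
    refine ⟨n, ?_⟩
    have hI : ((k * T : ℝ) : ℂ) * Complex.I = ((n * (2 * Real.pi) : ℝ) : ℂ) * Complex.I := by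
      simpa [mul_assoc] using hn
    exact_mod_cast mul_right_cancel₀ Complex.I_ne_zero hI
  · rintro ⟨n, hn⟩ s
    simp only [mul_add, hn]
    exact (periodic_circleMap c a).int_mul n _

end CircularMotion

/-- `(α₁, α₂)` is a unit-speed Legendrian curve in the anti-de Sitter space
`{(z, w) ∈ ℂ² : ‖z‖² - ‖w‖² = -1}`. The Legendrian condition is the vanishing of the complex-valued
indefinite Hermitian product of the velocity with the position. Differentiability is a separate
requirement because `deriv` takes the value `0` where it fails. -/
structure IsUnitSpeedLegendrian_s17 (α₁ α₂ : ℝ → ℂ) : Prop where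
  differentiable_fst : Differentiable ℝ α₁
  differentiable_snd : Differentiable ℝ α₂
  norm_sq_sub_norm_sq (t : ℝ) : ‖α₁ t‖ ^ 2 - ‖α₂ t‖ ^ 2 = -1
  norm_deriv_sq_sub_norm_deriv_sq (t : ℝ) : ‖deriv α₁ t‖ ^ 2 - ‖deriv α₂ t‖ ^ 2 = 1
  deriv_mul_conj_sub_deriv_mul_conj (t : ℝ) :
    deriv α₁ t * starRingEnd ℂ (α₁ t) - deriv α₂ t * starRingEnd ℂ (α₂ t) = 0

theorem isUnitSpeedLegendrian_circleMap_iff {a b k l : ℝ} :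
    IsUnitSpeedLegendrian_s17 (fun t ↦ circleMap 0 a (k * t)) (fun t ↦ circleMap 0 b (l * t)) ↔
      a ^ 2 - b ^ 2 = -1 ∧ (k * a) ^ 2 - (l * b) ^ 2 = 1 ∧ k * a ^ 2 = l * b ^ 2 := by
  have hdiff (a k : ℝ) : Differentiable ℝ fun t ↦ circleMap 0 a (k * t) := fun t ↦
    (hasDerivAt_circleMap_mul_left a k t 0).differentiableAt
  have hortho_iff : ((k * a ^ 2 : ℝ) * Complex.I - (l * b ^ 2 : ℝ) * Complex.I = 0) ↔
      k * a ^ 2 = l * b ^ 2 := by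
    rw [sub_eq_zero, mul_left_inj' Complex.I_ne_zero, Complex.ofReal_inj]
  constructor
  · rintro ⟨-, -, hnorm, hspeed, hortho⟩
    simp only [norm_circleMap_zero, sq_abs, norm_deriv_circleMap_mul_left_sq,
      deriv_circleMap_mul_left_mul_conj, hortho_iff, forall_const] at hnorm hspeed hortho
    exact ⟨hnorm, hspeed, hortho⟩
  · rintro ⟨hnorm, hspeed, hortho⟩
    refine ⟨hdiff a k, hdiff b l, ?_, ?_, ?_⟩ <;>
      simpa only [norm_circleMap_zero, sq_abs, norm_deriv_circleMap_mul_left_sq,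
        deriv_circleMap_mul_left_mul_conj, hortho_iff, forall_const]

theorem exists_pos_periodic_circleMap_pair_iff {a b k : ℝ} (l : ℝ) (ha : a ≠ 0) (hb : b ≠ 0)
    (hk : k ≠ 0) (c d : ℂ) :
    (∃ T > 0, Periodic (fun t ↦ (circleMap c a (k * t), circleMap d b (l * t))) T) ↔
      ∃ q : ℚ, l / k = q := by
  have hpair (T : ℝ) : Periodic (fun t ↦ (circleMap c a (k * t), circleMap d b (l * t))) T ↔
      Periodic (fun t ↦ circleMap c a (k * t)) T ∧ Periodic (fun t ↦ circleMap d b (l * t)) T := by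
    simp only [Periodic, Prod.mk.injEq, forall_and]
  rw [exists_pos_periodic_iff_exists_ne_zero]
  simp only [hpair, periodic_circleMap_mul_left_iff _ ha, periodic_circleMap_mul_left_iff _ hb]
  exact exists_ne_zero_int_multiples_iff_div_eq_ratCast l hk Real.two_pi_pos.ne'

theorem tanh_div_coth (δ : ℝ) :
    Real.tanh δ / (Real.cosh δ / Real.sinh δ) = Real.tanh δ ^ 2 := by
  rw [Real.tanh_eq_sinh_div_cosh, div_div_eq_mul_div]
  ring

theorem isUnitSpeedLegendrian_sinh_cosh {δ : ℝ} (hδ : δ ≠ 0) :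
    IsUnitSpeedLegendrian_s17
      (fun t ↦ circleMap 0 (Real.sinh δ) (Real.cosh δ / Real.sinh δ * t))
      (fun t ↦ circleMap 0 (Real.cosh δ) (Real.tanh δ * t)) := by
  have hsinh : Real.sinh δ ≠ 0 := Real.sinh_ne_zero.2 hδ
  have hcosh : Real.cosh δ ≠ 0 := (Real.cosh_pos δ).ne'
  rw [isUnitSpeedLegendrian_circleMap_iff, Real.tanh_eq_sinh_div_cosh, div_mul_cancel₀ _ hsinh,
    div_mul_cancel₀ _ hcosh]
  refine ⟨?_, Real.cosh_sq_sub_sinh_sq δ, ?_⟩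
  · rw [Real.cosh_sq]; ring
  · field_simp

theorem exists_pos_periodic_sinh_cosh_iff {δ : ℝ} (hδ : δ ≠ 0) :
    (∃ T > 0, Periodic (fun t ↦ (circleMap 0 (Real.sinh δ) (Real.cosh δ / Real.sinh δ * t),
        circleMap 0 (Real.cosh δ) (Real.tanh δ * t))) T) ↔
      ∃ q : ℚ, Real.tanh δ ^ 2 = q := by
  have hsinh : Real.sinh δ ≠ 0 := Real.sinh_ne_zero.2 hδ
  have hcosh : Real.cosh δ ≠ 0 := (Real.cosh_pos δ).ne'
  rw [exists_pos_periodic_circleMap_pair_iff _ hsinh hcosh (div_ne_zero hcosh hsinh),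
    tanh_div_coth]

/-- For `δ > 0`, the curve `α(t) = (sinh δ·e^{i coth δ·t}, cosh δ·e^{i tanh δ·t})` is a
unit-speed Legendrian curve in the anti-de Sitter space H³₁, and it is periodic iff
`tanh²δ` is rational. -/
theorem stmt_17 (δ : ℝ) (hδ : 0 < δ) (α₁ α₂ : ℝ → ℂ)
    (h₁ : ∀ t : ℝ, α₁ t = (Real.sinh δ : ℂ) *
        Complex.exp (Complex.I * ((Real.cosh δ / Real.sinh δ) * t)))
    (h₂ : ∀ t : ℝ, α₂ t = (Real.cosh δ : ℂ) *
        Complex.exp (Complex.I * (Real.tanh δ * t))) :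
    (∀ t : ℝ,
      ‖α₁ t‖ ^ 2 - ‖α₂ t‖ ^ 2 = -1 ∧
      ‖deriv α₁ t‖ ^ 2 - ‖deriv α₂ t‖ ^ 2 = 1 ∧
      deriv α₁ t * (starRingEnd ℂ) (α₁ t) - deriv α₂ t * (starRingEnd ℂ) (α₂ t) = 0) ∧
    ((∃ T > 0, ∀ t : ℝ, α₁ (t + T) = α₁ t ∧ α₂ (t + T) = α₂ t) ↔
      ∃ q : ℚ, Real.tanh δ ^ 2 = (q : ℝ)) := by
  have hα₁ : α₁ = fun t ↦ circleMap 0 (Real.sinh δ) (Real.cosh δ / Real.sinh δ * t) := by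
    funext t
    rw [h₁, circleMap_zero, mul_comm Complex.I]
    push_cast
    rfl
  have hα₂ : α₂ = fun t ↦ circleMap 0 (Real.cosh δ) (Real.tanh δ * t) := by
    funext t
    rw [h₂, circleMap_zero, mul_comm Complex.I, Complex.ofReal_mul]
  subst hα₁ hα₂
  have hLegendrian := isUnitSpeedLegendrian_sinh_cosh hδ.ne'
  have hperiodic := exists_pos_periodic_sinh_cosh_iff hδ.ne'
  simp only [Periodic, Prod.mk.injEq] at hperiodic
  exact ⟨fun t ↦ ⟨hLegendrian.norm_sq_sub_norm_sq t, hLegendrian.norm_deriv_sq_sub_norm_deriv_sq t,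
    hLegendrian.deriv_mul_conj_sub_deriv_mul_conj t⟩, hperiodic⟩
end

section
/- Let n₁, n₂ ≥ 1, U ⊆ ℝ² open and φ = (φ₁, φ₂) : U → ℂ² continuously differentiable with Im(∂_μφ, ∂_νφ) = 0 for μ, ν ∈ {1,2} (φ is Lagrangian in ℂ²). Let U₁ ⊆ ℝ^{n₁−1}, U₂ ⊆ ℝ^{n₂−1} be open and ψᵢ : Uᵢ → ℂ^{nᵢ} (i = 1,2) continuously differentiable with |ψᵢ| = 1, Im(∂ₐψᵢ, ψᵢ) = 0 (Legendrian) and Im(∂ₐψᵢ, ∂_bψᵢ) = 0 (isotropic) for all indices. Define Φ : U × U₁ × U₂ → ℂ^{n₁+n₂} by Φ(p, x, y) = (φ₁(p)·ψ₁(x), φ₂(p)·ψ₂(y)). Then for all points: (∂_μΦ, ∂_νΦ) = (∂_μφ, ∂_νφ); (∂_μΦ, ∂ₐΦ) = 0 for every partial derivative ∂ₐ in the U₁ variables; (∂_μΦ, ∂ⱼΦ) = 0 for every partial derivative ∂ⱼ in the U₂ variables; (∂ₐΦ, ∂ⱼΦ) = 0; (∂ₐΦ, ∂_bΦ) = |φ₁(p)|²·(∂ₐψ₁,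 ∂_bψ₁); and (∂ⱼΦ, ∂ₖΦ) = |φ₂(p)|²·(∂ⱼψ₂, ∂ₖψ₂). In particular all these Hermitian products have vanishing imaginary part, so Φ is a Lagrangian immersion into ℂ^{n₁+n₂} with induced metric ḡ = g + |φ₁|²·g₁ + |φ₂|²·g₂, where g, g₁, g₂ are the metrics induced by φ, ψ₁, ψ₂. -/
open scoped BigOperators

/-- The Hermitian product on ℂⁿ: (z,w) = Σⱼ zⱼ·conj(wⱼ). -/
noncomputable def herm {n : ℕ} (z w : Fin n → ℂ) : ℂ :=
  ∑ j, z j * (starRingEnd ℂ) (w j)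

/-- The Hermitian product on ℂ^{n₁} × ℂ^{n₂} = ℂ^{n₁+n₂}. -/
noncomputable def hermP {n₁ n₂ : ℕ} (z w : (Fin n₁ → ℂ) × (Fin n₂ → ℂ)) : ℂ :=
  herm z.1 w.1 + herm z.2 w.2

/-- The standard basis of ℝ². -/
noncomputable def e2 : Fin 2 → ℝ × ℝ := ![(1, 0), (0, 1)]

/-!
At a point of the unit sphere, `Re(∂ψ, ψ) = 0` because `|ψ|² = 1`, and `Im(∂ψ, ψ) = 0` because `ψ`
is Legendrian; so `∂ψ` is Hermitian-orthogonal to `ψ`. By the Leibniz rule each block of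
`dΦ(u, v, w)` is `φᵢ·dψᵢ + dφᵢ·ψᵢ`, a sum of two orthogonal terms, and expanding the Hermitian
product `h` yields `Φ^*h = φ^*h + |φ₁|² ψ₁^*h + |φ₂|² ψ₂^*h` on arbitrary tangent vectors. The six
formulas are the values of this form on coordinate vectors.
-/

open scoped ComplexConjugate Topology

section InnerProductSpace

variable {𝕜 F : Type*} [RCLike 𝕜] [NormedAddCommGroup F] [InnerProductSpace 𝕜 F]

lemma inner_smul_add_smul_of_orthogonal {z a b : F} (hz : inner 𝕜 z z = 1)
    (ha : inner 𝕜 a z = 0) (hb : inner 𝕜 b z = 0) (c α β : 𝕜) :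
    inner 𝕜 (c • a + α • z) (c • b + β • z) = conj α * β + (‖c‖ ^ 2 : ℝ) * inner 𝕜 a b := by
  have hzb : inner 𝕜 z b = 0 := inner_eq_zero_symm.mp hb
  have hcc : conj c * c = ((‖c‖ ^ 2 : ℝ) : 𝕜) := by simp [RCLike.conj_mul]
  simp only [inner_add_left, inner_add_right, inner_smul_left, inner_smul_right, ha, hzb, hz]
  linear_combination inner 𝕜 a b * hcc

lemma re_inner_hasFDerivAt_apply_eq_zero {E : Type*} [NormedAddCommGroup E] [NormedSpace ℝ E]
    [NormedSpace ℝ F] [IsScalarTower ℝ 𝕜 F] {f : E → F} {f' : E →L[ℝ] F} {x : E} {c : 𝕜}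
    (hf : HasFDerivAt f f' x) (hc : ∀ᶠ y in 𝓝 x, inner 𝕜 (f y) (f y) = c) (v : E) :
    RCLike.re (inner 𝕜 (f x) (f' v)) = 0 := by
  have hzero : HasFDerivAt (fun y => inner 𝕜 (f y) (f y)) (0 : E →L[ℝ] 𝕜) x :=
    (hasFDerivAt_const c x).congr_of_eventuallyEq hc
  have hsum : inner 𝕜 (f x) (f' v) + inner 𝕜 (f' v) (f x) = 0 := by
    simpa using DFunLike.congr_fun ((hf.inner 𝕜 hf).unique hzero) v
  have hre := congrArg RCLike.re hsum
  rw [map_add, inner_re_symm (f' v), map_zero] at hre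
  linarith

end InnerProductSpace

section HermitianProduct

variable {n : ℕ}

lemma herm_eq_inner (z w : Fin n → ℂ) :
    herm z w = inner ℂ (WithLp.toLp 2 w) (WithLp.toLp 2 z) :=
  rfl

@[simp]
lemma herm_zero_left (w : Fin n → ℂ) : herm 0 w = 0 := by
  simp [herm]

@[simp]
lemma herm_zero_right (z : Fin n → ℂ) : herm z 0 = 0 := by
  simp [herm]

@[simp]
lemma herm2_zero_right (z : ℂ × ℂ) : herm2 z 0 = 0 := by
  simp [herm2]

lemma herm_smul_add_smul_of_orthogonal {z a b : Fin n → ℂ} (hz : herm z z = 1)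
    (ha : herm a z = 0) (hb : herm b z = 0) (c α β : ℂ) :
    herm (c • a + α • z) (c • b + β • z) = α * conj β + (‖c‖ ^ 2 : ℝ) * herm a b := by
  rw [herm_eq_inner, inner_eq_zero_symm] at ha hb
  rw [mul_comm α]
  exact inner_smul_add_smul_of_orthogonal hz hb ha c β α

end HermitianProduct

section Legendrian

variable {E : Type*} [NormedAddCommGroup E] [NormedSpace ℝ E] {n : ℕ}

/-- A map `ψ` into `ℂⁿ` is Legendrian at `x` if it is differentiable at `x`, takes values in the
unit sphere near `x`, and its derivative at `x` maps into the contact hyperplane `Im(·, ψ x) = 0`.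
The derivative need not be injective. -/
structure IsLegendrianAt_s18 (ψ : E → Fin n → ℂ) (x : E) : Prop where
  differentiableAt : DifferentiableAt ℝ ψ x
  eventually_herm_self : ∀ᶠ y in 𝓝 x, herm (ψ y) (ψ y) = 1
  im_herm_fderiv : ∀ v, (herm (fderiv ℝ ψ x v) (ψ x)).im = 0

namespace IsLegendrianAt_s18

lemma of_forall_single {ι : Type*} [Fintype ι] [DecidableEq ι] {V : Set (ι → ℝ)} (hV : IsOpen V)
    {ψ : (ι → ℝ) → Fin n → ℂ} (hψ : DifferentiableOn ℝ ψ V)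
    (hs : ∀ x ∈ V, herm (ψ x) (ψ x) = 1) {x : ι → ℝ} (hx : x ∈ V)
    (hLeg : ∀ i, (herm (fderiv ℝ ψ x (Pi.single i 1)) (ψ x)).im = 0) : IsLegendrianAt_s18 ψ x where
  differentiableAt := hψ.differentiableAt (hV.mem_nhds hx)
  eventually_herm_self := Filter.eventually_of_mem (hV.mem_nhds hx) hs
  im_herm_fderiv v := by
    let contactForm : (Fin n → ℂ) →ₗ[ℝ] ℝ :=
      Complex.imLm ∘ₗ ((dotProductBilin ℝ ℂ).flip (star (ψ x)))
    have hzero : contactForm ∘ₗ (fderiv ℝ ψ x).toLinearMap = 0 :=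
      (Pi.basisFun ℝ ι).ext fun i => by
        rw [Pi.basisFun_apply]
        exact hLeg i
    exact LinearMap.congr_fun hzero v

variable {ψ : E → Fin n → ℂ} {x : E}

lemma herm_self (h : IsLegendrianAt_s18 ψ x) : herm (ψ x) (ψ x) = 1 :=
  h.eventually_herm_self.self_of_nhds

lemma herm_fderiv_self (h : IsLegendrianAt_s18 ψ x) (v : E) :
    herm (fderiv ℝ ψ x v) (ψ x) = 0 := by
  have hderiv := (PiLp.continuousLinearEquiv 2 ℝ fun _ : Fin n => ℂ).symm.hasFDerivAt.comp x
    h.differentiableAt.hasFDerivAt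
  have hre : (herm (fderiv ℝ ψ x v) (ψ x)).re = 0 :=
    re_inner_hasFDerivAt_apply_eq_zero hderiv h.eventually_herm_self v
  exact Complex.ext hre (h.im_herm_fderiv v)

lemma herm_smul_fderiv_add_smul (h : IsLegendrianAt_s18 ψ x) (c α β : ℂ) (v w : E) :
    herm (c • fderiv ℝ ψ x v + α • ψ x) (c • fderiv ℝ ψ x w + β • ψ x) =
      α * conj β + (‖c‖ ^ 2 : ℝ) * herm (fderiv ℝ ψ x v) (fderiv ℝ ψ x w) :=
  herm_smul_add_smul_of_orthogonal h.herm_self (h.herm_fderiv_self v) (h.herm_fderiv_self w) c α β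

end IsLegendrianAt_s18

end Legendrian

section LegendrianProduct

variable {E E₁ E₂ : Type*} [NormedAddCommGroup E] [NormedSpace ℝ E]
  [NormedAddCommGroup E₁] [NormedSpace ℝ E₁] [NormedAddCommGroup E₂] [NormedSpace ℝ E₂]
  {n₁ n₂ : ℕ} {φ : E → ℂ × ℂ} {ψ₁ : E₁ → Fin n₁ → ℂ} {ψ₂ : E₂ → Fin n₂ → ℂ}
  {p : E} {x : E₁} {y : E₂}

/-- The map `Φ(p, x, y) = (φ₁(p) ψ₁(x), φ₂(p) ψ₂(y))` built from `φ = (φ₁, φ₂)`, `ψ₁` and `ψ₂`. -/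
def legendrianProduct {X X₁ X₂ : Type*} (φ : X → ℂ × ℂ) (ψ₁ : X₁ → Fin n₁ → ℂ)
    (ψ₂ : X₂ → Fin n₂ → ℂ) (q : X × X₁ × X₂) : (Fin n₁ → ℂ) × (Fin n₂ → ℂ) :=
  ((φ q.1).1 • ψ₁ q.2.1, (φ q.1).2 • ψ₂ q.2.2)

lemma fderiv_legendrianProduct_apply (hφ : DifferentiableAt ℝ φ p)
    (hψ₁ : DifferentiableAt ℝ ψ₁ x) (hψ₂ : DifferentiableAt ℝ ψ₂ y) (ξ : E × E₁ × E₂) :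
    fderiv ℝ (legendrianProduct φ ψ₁ ψ₂) (p, x, y) ξ =
      ((φ p).1 • fderiv ℝ ψ₁ x ξ.2.1 + (fderiv ℝ φ p ξ.1).1 • ψ₁ x,
        (φ p).2 • fderiv ℝ ψ₂ y ξ.2.2 + (fderiv ℝ φ p ξ.1).2 • ψ₂ y) := by
  let q : E × E₁ × E₂ := (p, x, y)
  have hfst : HasFDerivAt Prod.fst (ContinuousLinearMap.fst ℝ E (E₁ × E₂)) q := hasFDerivAt_fst
  have hsnd : HasFDerivAt Prod.snd (ContinuousLinearMap.snd ℝ E (E₁ × E₂)) q := hasFDerivAt_snd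
  have hφ' := HasFDerivAt.comp (g := φ) q hφ.hasFDerivAt hfst
  have hψ₁' := HasFDerivAt.comp (g := ψ₁) q hψ₁.hasFDerivAt hsnd.fst
  have hψ₂' := HasFDerivAt.comp (g := ψ₂) q hψ₂.hasFDerivAt hsnd.snd
  have hΦ : HasFDerivAt (legendrianProduct φ ψ₁ ψ₂) _ q :=
    (hφ'.fst.smul hψ₁').prodMk (hφ'.snd.smul hψ₂')
  rw [hΦ.fderiv]
  rfl

theorem stmt_18_general (hφ : DifferentiableAt ℝ φ p) (hψ₁ : IsLegendrianAt_s18 ψ₁ x)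
    (hψ₂ : IsLegendrianAt_s18 ψ₂ y) (ξ η : E × E₁ × E₂) :
    hermP (fderiv ℝ (legendrianProduct φ ψ₁ ψ₂) (p, x, y) ξ)
        (fderiv ℝ (legendrianProduct φ ψ₁ ψ₂) (p, x, y) η) =
      herm2 (fderiv ℝ φ p ξ.1) (fderiv ℝ φ p η.1) +
        (‖(φ p).1‖ ^ 2 : ℝ) * herm (fderiv ℝ ψ₁ x ξ.2.1) (fderiv ℝ ψ₁ x η.2.1) +
        (‖(φ p).2‖ ^ 2 : ℝ) * herm (fderiv ℝ ψ₂ y ξ.2.2) (fderiv ℝ ψ₂ y η.2.2) := by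
  simp only [fderiv_legendrianProduct_apply hφ hψ₁.differentiableAt hψ₂.differentiableAt,
    hermP, herm2, hψ₁.herm_smul_fderiv_add_smul, hψ₂.herm_smul_fderiv_add_smul]
  ring

end LegendrianProduct

/-- Given a Lagrangian immersion `φ = (φ₁,φ₂) : U → ℂ²` and Legendrian (isotropic,
spherical) immersions `ψᵢ : Uᵢ → ℂ^{nᵢ}`, the map
`Φ(p,x,y) = (φ₁(p)ψ₁(x), φ₂(p)ψ₂(y))` has Hermitian products of partial derivatives:
`(∂_μΦ,∂_νΦ) = (∂_μφ,∂_νφ)`, the mixed products vanish,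
`(∂ₐΦ,∂_bΦ) = |φ₁|²(∂ₐψ₁,∂_bψ₁)` and `(∂ⱼΦ,∂ₖΦ) = |φ₂|²(∂ⱼψ₂,∂ₖψ₂)`; so Φ is a
Lagrangian immersion into ℂ^{n₁+n₂} with induced metric `g + |φ₁|²g₁ + |φ₂|²g₂`. -/
theorem stmt_18 (n₁ n₂ : ℕ) (h₁ : 1 ≤ n₁) (h₂ : 1 ≤ n₂)
    (U : Set (ℝ × ℝ)) (hU : IsOpen U)
    (φ₁ φ₂ : ℝ × ℝ → ℂ)
    (hφ₁ : ContDiffOn ℝ 1 φ₁ U) (hφ₂ : ContDiffOn ℝ 1 φ₂ U)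
    (φ : ℝ × ℝ → ℂ × ℂ) (hφ : ∀ p, φ p = (φ₁ p, φ₂ p))
    (hLag : ∀ p ∈ U, ∀ μ ν : Fin 2,
      (herm2 (fderiv ℝ φ p (e2 μ)) (fderiv ℝ φ p (e2 ν))).im = 0)
    (U₁ : Set (Fin (n₁ - 1) → ℝ)) (hU₁ : IsOpen U₁)
    (U₂ : Set (Fin (n₂ - 1) → ℝ)) (hU₂ : IsOpen U₂)
    (ψ₁ : (Fin (n₁ - 1) → ℝ) → Fin n₁ → ℂ) (hψ₁ : ContDiffOn ℝ 1 ψ₁ U₁)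
    (ψ₂ : (Fin (n₂ - 1) → ℝ) → Fin n₂ → ℂ) (hψ₂ : ContDiffOn ℝ 1 ψ₂ U₂)
    (hs₁ : ∀ x ∈ U₁, herm (ψ₁ x) (ψ₁ x) = 1)
    (hs₂ : ∀ y ∈ U₂, herm (ψ₂ y) (ψ₂ y) = 1)
    (hLeg₁ : ∀ x ∈ U₁, ∀ a, (herm (fderiv ℝ ψ₁ x (Pi.single a 1)) (ψ₁ x)).im = 0)
    (hLeg₂ : ∀ y ∈ U₂, ∀ j, (herm (fderiv ℝ ψ₂ y (Pi.single j 1)) (ψ₂ y)).im = 0)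
    (hiso₁ : ∀ x ∈ U₁, ∀ a b,
      (herm (fderiv ℝ ψ₁ x (Pi.single a 1)) (fderiv ℝ ψ₁ x (Pi.single b 1))).im = 0)
    (hiso₂ : ∀ y ∈ U₂, ∀ j k,
      (herm (fderiv ℝ ψ₂ y (Pi.single j 1)) (fderiv ℝ ψ₂ y (Pi.single k 1))).im = 0)
    (Φ : (ℝ × ℝ) × (Fin (n₁ - 1) → ℝ) × (Fin (n₂ - 1) → ℝ) →
      (Fin n₁ → ℂ) × (Fin n₂ → ℂ))
    (hΦ : ∀ q, Φ q = (fun i => φ₁ q.1 * ψ₁ q.2.1 i, fun i => φ₂ q.1 * ψ₂ q.2.2 i)) :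
    ∀ p ∈ U, ∀ x ∈ U₁, ∀ y ∈ U₂,
      (∀ μ ν : Fin 2,
        hermP (fderiv ℝ Φ (p, x, y) (e2 μ, 0, 0)) (fderiv ℝ Φ (p, x, y) (e2 ν, 0, 0))
          = herm2 (fderiv ℝ φ p (e2 μ)) (fderiv ℝ φ p (e2 ν))) ∧
      (∀ (μ : Fin 2) (a : Fin (n₁ - 1)),
        hermP (fderiv ℝ Φ (p, x, y) (e2 μ, 0, 0))
            (fderiv ℝ Φ (p, x, y) (0, Pi.single a 1, 0)) = 0) ∧
      (∀ (μ : Fin 2) (j : Fin (n₂ - 1)),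
        hermP (fderiv ℝ Φ (p, x, y) (e2 μ, 0, 0))
            (fderiv ℝ Φ (p, x, y) (0, 0, Pi.single j 1)) = 0) ∧
      (∀ (a : Fin (n₁ - 1)) (j : Fin (n₂ - 1)),
        hermP (fderiv ℝ Φ (p, x, y) (0, Pi.single a 1, 0))
            (fderiv ℝ Φ (p, x, y) (0, 0, Pi.single j 1)) = 0) ∧
      (∀ a b : Fin (n₁ - 1),
        hermP (fderiv ℝ Φ (p, x, y) (0, Pi.single a 1, 0))
            (fderiv ℝ Φ (p, x, y) (0, Pi.single b 1, 0))
          = ((‖φ₁ p‖ ^ 2 : ℝ) : ℂ) *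
              herm (fderiv ℝ ψ₁ x (Pi.single a 1)) (fderiv ℝ ψ₁ x (Pi.single b 1))) ∧
      (∀ j k : Fin (n₂ - 1),
        hermP (fderiv ℝ Φ (p, x, y) (0, 0, Pi.single j 1))
            (fderiv ℝ Φ (p, x, y) (0, 0, Pi.single k 1))
          = ((‖φ₂ p‖ ^ 2 : ℝ) : ℂ) *
              herm (fderiv ℝ ψ₂ y (Pi.single j 1)) (fderiv ℝ ψ₂ y (Pi.single k 1))) := by
  obtain rfl : φ = fun p => (φ₁ p, φ₂ p) := funext hφ
  obtain rfl : Φ = legendrianProduct (fun p => (φ₁ p, φ₂ p)) ψ₁ ψ₂ := funext hΦ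
  intro p hp x hx y hy
  have dφ : DifferentiableAt ℝ (fun p => (φ₁ p, φ₂ p)) p :=
    ((hφ₁.prodMk hφ₂).differentiableOn one_ne_zero).differentiableAt (hU.mem_nhds hp)
  have lψ₁ : IsLegendrianAt_s18 ψ₁ x :=
    .of_forall_single hU₁ (hψ₁.differentiableOn one_ne_zero) hs₁ hx (hLeg₁ x hx)
  have lψ₂ : IsLegendrianAt_s18 ψ₂ y :=
    .of_forall_single hU₂ (hψ₂.differentiableOn one_ne_zero) hs₂ hy (hLeg₂ y hy)
  simp [stmt_18_general dφ lψ₁ lψ₂]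
end

section
/- Define φ : ℝ² → ℂ² by φ(s,t) = (cos s · e^{it}, sin s · e^{it}). Then for all (s,t) the Hermitian product of the partial derivatives satisfies (∂ₛφ, ∂ₜφ) = 0 and (∂ₛφ, ∂ₛφ) = (∂ₜφ, ∂ₜφ) = 1. Hence φ is a Lagrangian immersion of the plane into ℂ² whose induced metric is the flat Euclidean metric ds² + dt². (This is the surface, unique up to scaling, appearing in case (iii) of the classification of the Lagrangian immersions (φ₁ψ₁, φ₂ψ₂) with parallel mean curvature vector.) -/
/-!
Writing `γ s = (cos s, sin s)`, the map is `φ (s, t) = exp (I t) • γ s`, so its partial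
derivatives are `exp (I t) • γ' s` and `(exp (I t) * I) • γ s`. The scalars have modulus one,
`γ' s = γ (s + π / 2)`, and the Hermitian product of `γ a` and `γ b` is `cos (a - b)`.
-/

section CurveSMul

variable {𝕜 A E : Type*} [NontriviallyNormedField 𝕜] [NormedRing A] [NormedAlgebra 𝕜 A]
  [NormedAddCommGroup E] [NormedSpace 𝕜 E] [Module A E] [IsBoundedSMul A E] [IsScalarTower 𝕜 A E]
  {u : 𝕜 → A} {u' : A} {γ : 𝕜 → E} {γ' : E} {s t : 𝕜}

theorem fderiv_curve_smul_curve_apply (hu : HasDerivAt u u' t) (hγ : HasDerivAt γ γ' s)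
    (v : 𝕜 × 𝕜) :
    fderiv 𝕜 (fun p : 𝕜 × 𝕜 => u p.2 • γ p.1) (s, t) v = v.1 • u t • γ' + v.2 • u' • γ s := by
  have hu_snd : HasFDerivAt (fun p : 𝕜 × 𝕜 => u p.2) _ (s, t) :=
    HasFDerivAt.comp (g := u) (s, t) hu.hasFDerivAt hasFDerivAt_snd
  have hγ_fst : HasFDerivAt (fun p : 𝕜 × 𝕜 => γ p.1) _ (s, t) :=
    HasFDerivAt.comp (g := γ) (s, t) hγ.hasFDerivAt hasFDerivAt_fst
  rw [(hu_snd.fun_smul hγ_fst).fderiv]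
  simp [smul_comm v.1 (u t) γ']

end CurveSMul

theorem herm2_smul_smul (a b : ℂ) (z w : ℂ × ℂ) :
    herm2 (a • z) (b • w) = a * (starRingEnd ℂ) b * herm2 z w := by
  simp only [herm2, Prod.smul_fst, Prod.smul_snd, smul_eq_mul, map_mul]
  ring

theorem herm2_smul_self (c : ℂ) (z : ℂ × ℂ) :
    herm2 (c • z) (c • z) = (‖c‖ : ℂ) ^ 2 * herm2 z z := by
  rw [herm2_smul_smul, Complex.mul_conj']

theorem hasDerivAt_exp_I_mul (t : ℝ) :
    HasDerivAt (fun x : ℝ => Complex.exp (Complex.I * x))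
      (Complex.exp (Complex.I * t) * Complex.I) t := by
  simpa using ((hasDerivAt_id t).ofReal_comp.const_mul Complex.I).cexp

/-- The unit circle of the real plane `ℝ² ⊆ ℂ²`, parametrized by arc length. -/
noncomputable def realCircle (s : ℝ) : ℂ × ℂ :=
  (Real.cos s, Real.sin s)

theorem hasDerivAt_realCircle (s : ℝ) :
    HasDerivAt realCircle (realCircle (s + Real.pi / 2)) s := by
  rw [realCircle, Real.cos_add_pi_div_two, Real.sin_add_pi_div_two]
  exact (Real.hasDerivAt_cos s).ofReal_comp.prodMk (Real.hasDerivAt_sin s).ofReal_comp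

theorem herm2_realCircle (a b : ℝ) : herm2 (realCircle a) (realCircle b) = Real.cos (a - b) := by
  simp only [herm2, realCircle, Complex.conj_ofReal, Real.cos_sub, Complex.ofReal_add,
    Complex.ofReal_mul]

/-- The map `φ(s,t) = (cos s·e^{it}, sin s·e^{it})` satisfies `(∂ₛφ,∂ₜφ) = 0` and
`(∂ₛφ,∂ₛφ) = (∂ₜφ,∂ₜφ) = 1`: it is a Lagrangian immersion of the plane into ℂ² inducing
the flat Euclidean metric `ds² + dt²`. -/
theorem stmt_19 (φ : ℝ × ℝ → ℂ × ℂ)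
    (hφ : ∀ p : ℝ × ℝ, φ p =
      ((Real.cos p.1 : ℂ) * Complex.exp (Complex.I * p.2),
       (Real.sin p.1 : ℂ) * Complex.exp (Complex.I * p.2))) :
    ∀ p : ℝ × ℝ,
      herm2 (fderiv ℝ φ p (1, 0)) (fderiv ℝ φ p (0, 1)) = 0 ∧
      herm2 (fderiv ℝ φ p (1, 0)) (fderiv ℝ φ p (1, 0)) = 1 ∧
      herm2 (fderiv ℝ φ p (0, 1)) (fderiv ℝ φ p (0, 1)) = 1 := by
  rintro ⟨s, t⟩
  obtain rfl : φ = fun p : ℝ × ℝ => Complex.exp (Complex.I * p.2) • realCircle p.1 := by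
    ext p <;> simp [hφ, realCircle, mul_comm]
  have hderiv := fderiv_curve_smul_curve_apply (hasDerivAt_exp_I_mul t) (hasDerivAt_realCircle s)
  have hnorm_exp : ‖Complex.exp (Complex.I * t)‖ = 1 := Complex.norm_exp_I_mul_ofReal t
  have hnorm_exp_I : ‖Complex.exp (Complex.I * t) * Complex.I‖ = 1 := by
    rw [norm_mul, hnorm_exp, Complex.norm_I, mul_one]
  simp only [hderiv, one_smul, zero_smul, add_zero, zero_add]
  refine ⟨?_, ?_, ?_⟩
  · rw [herm2_smul_smul, herm2_realCircle]
    simp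
  · rw [herm2_smul_self, hnorm_exp, herm2_realCircle]
    simp
  · rw [herm2_smul_self, hnorm_exp_I, herm2_realCircle]
    simp
end
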